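/- (Theorem 16) Let 0 < θ, θ₁ < 1, 0 < r, r₀, r₁, q₁ ≤ ∞, a, a₁, b₀, b₁ ∈ SV, ‖s^{-1/r₀} b₀(s)‖_{r₀,(1,∞)} < ∞, and ‖s^{-1/r₁} b₁(s)/a₁(s)‖_{r₁,(1,∞)} < ∞. Put c₀(t) = ‖s^{-1/r₀} b₀(s)‖_{r₀,(t,∞)}, c₁(t) = a₁(t) ‖s^{-1/r₁} b₁(s)/a₁(s)‖_{r₁,(t,∞)}, and ρ(t) = t^{θ₁} c₀(t)/c₁(t). Then (Ā_{0,r₀;b₀}, Ā^𝓛_{θ₁,r₁,b₁,q₁,a₁})_{θ,r;a} ≅ Ā_{η,r;a^#}, where η = θθ₁ and a^#(t) = c₀(t)^{1-θ} c₁(t)^θ a(ρ(t)). -/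

import Mathlib

open MeasureTheory Set ENNReal Filter

noncomputable section

/-- The `L_q` quasi-norm (with respect to Lebesgue measure) of an `ℝ≥0∞`-valued
function over a set of reals; for `q = ∞` it is the essential supremum. -/
def LqNorm (q : ℝ≥0∞) (s : Set ℝ) (g : ℝ → ℝ≥0∞) : ℝ≥0∞ :=
  if q = ∞ then essSup g (volume.restrict s)
  else (∫⁻ t in s, g t ^ q.toReal) ^ q⁻¹.toReal

/-- The weight `s ↦ s ^ (-1/r) * b s`, as an `ℝ≥0∞`-valued function
(`1/∞ = 0` by convention). -/
def svWgt (r : ℝ≥0∞) (b : ℝ → ℝ) : ℝ → ℝ≥0∞ :=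
  fun s => ENNReal.ofReal (s ^ (-(r⁻¹.toReal)) * b s)

/-- `f` and `g` are equivalent on `s`: each is bounded by a constant multiple
of the other there. -/
def EquivOn (s : Set ℝ) (f g : ℝ → ℝ) : Prop :=
  ∃ C : ℝ, 0 < C ∧ ∀ t ∈ s, C⁻¹ * g t ≤ f t ∧ f t ≤ C * g t

/-- A positive measurable function `b` on `(0,∞)` is slowly varying if for every
`ε > 0`, `t ^ ε * b t` is equivalent to a non-decreasing function and
`t ^ (-ε) * b t` is equivalent to a non-increasing function. -/
def SlowlyVarying (b : ℝ → ℝ) : Prop :=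
  AEMeasurable b (volume.restrict (Ioi 0)) ∧ (∀ t ∈ Ioi (0:ℝ), 0 < b t) ∧
    ∀ ε : ℝ, 0 < ε →
      (∃ g : ℝ → ℝ, MonotoneOn g (Ioi 0) ∧ EquivOn (Ioi 0) (fun t => t ^ ε * b t) g) ∧
      (∃ g : ℝ → ℝ, AntitoneOn g (Ioi 0) ∧ EquivOn (Ioi 0) (fun t => t ^ (-ε) * b t) g)

/-- A quasi-Banach space continuously embedded into the ambient (Hausdorff) space `E`,
recorded via its extended-real-valued quasi-norm; the space itself is the set of
vectors of finite quasi-norm. -/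
structure QuasiBanach (E : Type*) [AddCommGroup E] [Module ℝ E] where
  N : E → ℝ≥0∞
  zero : N 0 = 0
  definite : ∀ x, N x = 0 → x = 0
  smul : ∀ (c : ℝ) (x : E), N (c • x) = ENNReal.ofReal |c| * N x
  quasi : ∃ C : ℝ≥0∞, 1 ≤ C ∧ C ≠ ∞ ∧ ∀ x y, N (x + y) ≤ C * (N x + N y)
  complete : ∀ f : ℕ → E,
    (∀ ε : ℝ≥0∞, 0 < ε → ∃ M : ℕ, ∀ m ≥ M, ∀ n ≥ M, N (f m - f n) < ε) →
    (∀ n, N (f n) ≠ ∞) →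
    ∃ g : E, N g ≠ ∞ ∧ Tendsto (fun n => N (f n - g)) atTop (nhds 0)

variable {E : Type*} [AddCommGroup E] [Module ℝ E]

/-- The Peetre K-functional of the couple whose quasi-norms are `N₀`, `N₁`. -/
def Kf (N₀ N₁ : E → ℝ≥0∞) (t : ℝ) (f : E) : ℝ≥0∞ :=
  ⨅ g : E, N₀ g + ENNReal.ofReal t * N₁ (f - g)

/-- The quasi-norm of the real interpolation space `Ā_{θ,q;b}`. -/
def normK (N₀ N₁ : E → ℝ≥0∞) (θ : ℝ) (q : ℝ≥0∞) (b : ℝ → ℝ) (f : E) : ℝ≥0∞ :=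
  LqNorm q (Ioi 0) fun u =>
    ENNReal.ofReal (u ^ (-θ - q⁻¹.toReal) * b u) * Kf N₀ N₁ u f

/-- The quasi-norm of the limiting interpolation space `Ā^𝓛_{σ,r,b,q,a}`. -/
def normL (N₀ N₁ : E → ℝ≥0∞) (σ : ℝ) (r q : ℝ≥0∞) (b a : ℝ → ℝ) (f : E) : ℝ≥0∞ :=
  LqNorm r (Ioi 0) fun t =>
    ENNReal.ofReal (t ^ (-(r⁻¹.toReal)) * (b t / a t)) *
      LqNorm q (Ioo 0 t) fun u =>
        ENNReal.ofReal (u ^ (-σ - q⁻¹.toReal) * a u) * Kf N₀ N₁ u f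

/-- The quasi-norm of the limiting interpolation space `Ā^𝓡_{σ,r,b,q,a}`. -/
def normR (N₀ N₁ : E → ℝ≥0∞) (σ : ℝ) (r q : ℝ≥0∞) (b a : ℝ → ℝ) (f : E) : ℝ≥0∞ :=
  LqNorm r (Ioi 0) fun t =>
    ENNReal.ofReal (t ^ (-(r⁻¹.toReal)) * (b t / a t)) *
      LqNorm q (Ioi t) fun u =>
        ENNReal.ofReal (u ^ (-σ - q⁻¹.toReal) * a u) * Kf N₀ N₁ u f

/-- Two (extended-real-valued) quasi-norms define the same space with
equivalent quasi-norms. -/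
def EquivNorms (nX nY : E → ℝ≥0∞) : Prop :=
  ∃ C : ℝ≥0∞, 0 < C ∧ C ≠ ∞ ∧ ∀ f : E, C⁻¹ * nY f ≤ nX f ∧ nX f ≤ C * nY f

/-!
In the logarithmic variable `x = log t` a weight becomes `e^w`, the power `t^θ` a slope `θ`, and
slow variation says that all slopes of `w` over long intervals are arbitrarily small. If
`X₀ = Ā_{0,r₀;b₀}` and `X₁ = Ā^𝓛_{θ₁,r₁,b₁,q₁,a₁}`, then `c₀(t) K(t, f) ≲ K(ρ(t), f; X₀, X₁)`, and a
near-optimal decomposition of `f` at the point `t` for the couple `(A₀, A₁)` gives the reverse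
estimate up to values of `K(s, f)` damped by a power of `min (s/t, t/s)`. All functions that
occur change at most exponentially in `x`, so their `L_q` quasi-norms are comparable with `ℓ_q`
quasi-norms over the integers. There the damping costs only a constant for every `0 < q ≤ ∞`, which
replaces the Hardy inequalities, and the change of variables `t ↦ ρ(t)` is harmless because the
slopes of `log ρ` are bounded and bounded away from zero.
-/

open scoped NNReal

/-- The `ℝ≥0`-valued exponential, the building block of all weights and constants in the
logarithmic variable `x = log t`. -/
def nnexp (x : ℝ) : ℝ≥0 := (Real.exp x).toNNReal

/-- The convolution kernel `e^{-γ|x - z|}`, that is `min (s/t, t/s) ^ γ` for `x = log s` and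
`z = log t`. -/
def expKernel (γ x z : ℝ) : ℝ≥0 := nnexp (-γ * |x - z|)

section nnexp

lemma coe_nnexp (x : ℝ) : (nnexp x : ℝ) = Real.exp x := Real.coe_toNNReal _ (Real.exp_pos x).le

lemma nnexp_zero : nnexp 0 = 1 := by simp [nnexp]

lemma nnexp_add (x y : ℝ) : nnexp (x + y) = nnexp x * nnexp y := by
  rw [nnexp, Real.exp_add, Real.toNNReal_mul (Real.exp_pos x).le, nnexp, nnexp]

lemma nnexp_le_nnexp {x y : ℝ} : nnexp x ≤ nnexp y ↔ x ≤ y := by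
  rw [← NNReal.coe_le_coe, coe_nnexp, coe_nnexp, Real.exp_le_exp]

lemma nnexp_rpow (x p : ℝ) : nnexp x ^ p = nnexp (p * x) := by
  rw [← NNReal.coe_inj, NNReal.coe_rpow, coe_nnexp, coe_nnexp, ← Real.exp_mul, mul_comm]

lemma nnexp_neg_mul_nnexp (x : ℝ) : nnexp (-x) * nnexp x = 1 := by
  rw [← nnexp_add, neg_add_cancel, nnexp_zero]

lemma nnexp_mul_le_iff {x : ℝ} {a b : ℝ≥0∞} : nnexp x * a ≤ b ↔ a ≤ nnexp (-x) * b := by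
  have h : (nnexp (-x) : ℝ≥0∞) * nnexp x = 1 := mod_cast nnexp_neg_mul_nnexp x
  constructor <;> intro hab
  · calc a = nnexp (-x) * (nnexp x * a) := by rw [← mul_assoc, h, one_mul]
      _ ≤ nnexp (-x) * b := by gcongr
  · calc nnexp x * a ≤ nnexp x * (nnexp (-x) * b) := by gcongr
      _ = b := by rw [← mul_assoc, mul_comm (nnexp x : ℝ≥0∞), h, one_mul]

lemma nnexp_log {t : ℝ} (ht : 0 < t) : (nnexp (Real.log t) : ℝ≥0∞) = ENNReal.ofReal t := by
  rw [nnexp, Real.exp_log ht, ENNReal.ofReal]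

lemma expKernel_of_le {x z : ℝ} (h : x ≤ z) (γ : ℝ) : expKernel γ x z = nnexp (γ * (x - z)) := by
  rw [expKernel, abs_of_nonpos (sub_nonpos.2 h), neg_mul_neg]

lemma expKernel_add (γ γ' x z : ℝ) :
    expKernel (γ + γ') x z = expKernel γ x z * expKernel γ' x z := by
  rw [expKernel, neg_add, add_mul, nnexp_add, expKernel, expKernel]

lemma expKernel_comm (γ x z : ℝ) : expKernel γ x z = expKernel γ z x := by
  rw [expKernel, abs_sub_comm, expKernel]

lemma expKernel_le_one {γ : ℝ} (hγ : 0 ≤ γ) (x z : ℝ) : expKernel γ x z ≤ 1 := by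
  rw [← nnexp_zero, expKernel, nnexp_le_nnexp, neg_mul]
  exact neg_nonpos.2 (by positivity)

lemma expKernel_le_nnexp_mul {γ : ℝ} (hγ : 0 ≤ γ) (x y z : ℝ) :
    expKernel γ x z ≤ nnexp (γ * |x - y|) * expKernel γ y z := by
  rw [expKernel, expKernel, ← nnexp_add, nnexp_le_nnexp, abs_sub_comm x y]
  linarith [mul_le_mul_of_nonneg_left (abs_sub_le y x z) hγ]

lemma expKernel_eq_mul {γ x y z : ℝ} (hxy : x ≤ y) (hyz : y ≤ z) :
    expKernel γ x z = expKernel γ x y * expKernel γ y z := by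
  rw [expKernel_of_le (hxy.trans hyz), expKernel_of_le hxy, expKernel_of_le hyz, ← nnexp_add,
    ← mul_add, sub_add_sub_cancel]

end nnexp

section eLpNorm

variable {α ι : Type*} [MeasurableSpace α] {μ : Measure α} {q : ℝ≥0∞}

lemma eLpNorm_rpow_toReal (hq : q ≠ 0) (hq' : q ≠ ∞) (g : α → ℝ≥0∞) :
    eLpNorm g q μ ^ q.toReal = ∫⁻ x, g x ^ q.toReal ∂μ := by
  rw [eLpNorm_eq_lintegral_rpow_enorm_toReal hq hq', ← ENNReal.rpow_mul,
    one_div_mul_cancel (ENNReal.toReal_pos hq hq').ne', ENNReal.rpow_one]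
  simp only [enorm_eq_self]

lemma eLpNorm_top_eq_essSup (g : α → ℝ≥0∞) : eLpNorm g ∞ μ = essSup g μ := by
  simp only [eLpNorm_exponent_top, eLpNormEssSup, enorm_eq_self]

lemma eLpNorm_mono_of_ae_le {g h : α → ℝ≥0∞} (hgh : ∀ᵐ x ∂μ, g x ≤ h x) :
    eLpNorm g q μ ≤ eLpNorm h q μ :=
  eLpNorm_mono_enorm_ae (by simpa only [enorm_eq_self] using hgh)

lemma eLpNorm_mono_of_le {g h : α → ℝ≥0∞} (hgh : ∀ x, g x ≤ h x) :
    eLpNorm g q μ ≤ eLpNorm h q μ :=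
  eLpNorm_mono_of_ae_le (.of_forall hgh)

lemma eLpNorm_restrict_mono_of_le {s : Set α} (hs : MeasurableSet s) {g h : α → ℝ≥0∞}
    (hgh : ∀ x ∈ s, g x ≤ h x) : eLpNorm g q (μ.restrict s) ≤ eLpNorm h q (μ.restrict s) :=
  eLpNorm_mono_of_ae_le (ae_restrict_of_forall_mem hs hgh)

lemma mul_eLpNorm_le (hq : q ≠ 0) (c : ℝ≥0∞) (g : α → ℝ≥0∞) :
    c * eLpNorm g q μ ≤ eLpNorm (fun x => c * g x) q μ := by
  rcases eq_or_ne q ∞ with rfl | hq'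
  · rw [eLpNorm_top_eq_essSup, eLpNorm_top_eq_essSup, ENNReal.essSup_const_mul]
  have hp := ENNReal.toReal_pos hq hq'
  rw [← ENNReal.rpow_le_rpow_iff hp, ENNReal.mul_rpow_of_nonneg _ _ hp.le,
    eLpNorm_rpow_toReal hq hq', eLpNorm_rpow_toReal hq hq']
  simp only [ENNReal.mul_rpow_of_nonneg _ _ hp.le]
  exact lintegral_const_mul_le _ _

lemma eLpNorm_const_mul_eq (hq : q ≠ 0) {c : ℝ≥0∞} (hc : c ≠ ∞) (g : α → ℝ≥0∞) :
    eLpNorm (fun x => c * g x) q μ = c * eLpNorm g q μ := by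
  rcases eq_or_ne c 0 with rfl | hc₀
  · simp
  refine le_antisymm ?_ (mul_eLpNorm_le hq c g)
  calc eLpNorm (fun x => c * g x) q μ
      = c * (c⁻¹ * eLpNorm (fun x => c * g x) q μ) := by
        rw [← mul_assoc, ENNReal.mul_inv_cancel hc₀ hc, one_mul]
    _ ≤ c * eLpNorm (fun x => c⁻¹ * (c * g x)) q μ := by gcongr; exact mul_eLpNorm_le hq _ _
    _ = c * eLpNorm g q μ := by
        simp only [← mul_assoc, ENNReal.inv_mul_cancel hc₀ hc, one_mul]

lemma eLpNorm_le_mul_of_le (hq : q ≠ 0) (C : ℝ≥0) {g h : α → ℝ≥0∞}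
    (hgh : ∀ x, g x ≤ C * h x) : eLpNorm g q μ ≤ C * eLpNorm h q μ :=
  (eLpNorm_mono_of_le hgh).trans_eq (eLpNorm_const_mul_eq hq ENNReal.coe_ne_top h)

lemma exists_eLpNorm_restrict_union_le (q : ℝ≥0∞) :
    ∃ C : ℝ≥0, ∀ (s t : Set α) (g : α → ℝ≥0∞),
      eLpNorm g q (μ.restrict (s ∪ t)) ≤
        C * (eLpNorm g q (μ.restrict s) + eLpNorm g q (μ.restrict t)) := by
  rcases eq_or_ne q 0 with rfl | hq
  · exact ⟨0, by simp⟩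
  rcases eq_or_ne q ∞ with rfl | hq'
  · refine ⟨1, fun s t g => ?_⟩
    simp only [eLpNorm_top_eq_essSup, ENNReal.coe_one, one_mul]
    refine essSup_le_of_ae_le _ (ae_restrict_union_iff s t _ |>.2 ⟨?_, ?_⟩)
    · exact (ENNReal.ae_le_essSup g).mono fun x hx => hx.trans le_self_add
    · exact (ENNReal.ae_le_essSup g).mono fun x hx => hx.trans le_add_self
  have hp := ENNReal.toReal_pos hq hq'
  refine ⟨2 ^ (1 / q.toReal), fun s t g => ?_⟩
  rw [← ENNReal.rpow_le_rpow_iff hp, ENNReal.mul_rpow_of_nonneg _ _ hp.le,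
    eLpNorm_rpow_toReal hq hq', ← ENNReal.coe_rpow_of_nonneg _ hp.le, ← NNReal.rpow_mul,
    one_div_mul_cancel hp.ne', NNReal.rpow_one]
  set A := eLpNorm g q (μ.restrict s)
  set B := eLpNorm g q (μ.restrict t)
  calc ∫⁻ x in s ∪ t, g x ^ q.toReal ∂μ
      ≤ ∫⁻ x in s, g x ^ q.toReal ∂μ + ∫⁻ x in t, g x ^ q.toReal ∂μ := lintegral_union_le _ _ _
    _ = A ^ q.toReal + B ^ q.toReal := by
        rw [eLpNorm_rpow_toReal hq hq', eLpNorm_rpow_toReal hq hq']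
    _ ≤ (A + B) ^ q.toReal + (A + B) ^ q.toReal := by
        gcongr
        · exact le_self_add
        · exact le_add_self
    _ = (2 : ℝ≥0) * (A + B) ^ q.toReal := by rw [ENNReal.coe_ofNat, two_mul]

lemma eLpNorm_restrict_iUnion [Countable ι] [MeasurableSpace ι] [MeasurableSingletonClass ι]
    {s : ι → Set α} (hs : ∀ i, MeasurableSet (s i)) (hd : Pairwise (Disjoint.onFun s))
    (g : α → ℝ≥0∞) :
    eLpNorm g q (μ.restrict (⋃ i, s i)) =
      eLpNorm (fun i => eLpNorm g q (μ.restrict (s i))) q Measure.count := by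
  rcases eq_or_ne q 0 with rfl | hq
  · simp
  rcases eq_or_ne q ∞ with rfl | hq'
  · simp only [eLpNorm_top_eq_essSup, essSup_count]
    refine le_antisymm (essSup_le_of_ae_le _ (ae_restrict_iUnion_iff s _ |>.2 fun i => ?_))
      (iSup_le fun i => essSup_mono_measure (Measure.restrict_mono (subset_iUnion s i) le_rfl
        |>.absolutelyContinuous))
    exact (ENNReal.ae_le_essSup g).mono fun x hx =>
      hx.trans (le_iSup (fun i => essSup g (μ.restrict (s i))) i)
  have hp := ENNReal.toReal_pos hq hq'
  apply ENNReal.rpow_left_injective hp.ne'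
  simp only [eLpNorm_rpow_toReal hq hq', lintegral_count, lintegral_iUnion hs hd]

lemma le_eLpNorm_restrict (hq : q ≠ 0) {s t : Set α} (hs : MeasurableSet s) (hμs : μ s = 1)
    (hst : s ⊆ t) {A : ℝ≥0∞} {g : α → ℝ≥0∞} (hA : ∀ x ∈ s, A ≤ g x) :
    A ≤ eLpNorm g q (μ.restrict t) := by
  have hμ : μ.restrict s ≠ 0 := fun h => by simp [Measure.restrict_eq_zero.1 h] at hμs
  calc A = eLpNorm (fun _ => A) q (μ.restrict s) := by
        rw [eLpNorm_const A hq hμ, Measure.restrict_apply_univ, hμs, ENNReal.one_rpow, mul_one,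
          enorm_eq_self]
    _ ≤ eLpNorm g q (μ.restrict s) := eLpNorm_restrict_mono_of_le hs hA
    _ ≤ eLpNorm g q (μ.restrict t) := eLpNorm_mono_measure g (Measure.restrict_mono hst le_rfl)

lemma eLpNorm_restrict_le_of_le (hq : q ≠ 0) {s : Set α} (hs : MeasurableSet s) (hμs : μ s = 1)
    {A : ℝ≥0∞} {g : α → ℝ≥0∞} (hA : ∀ x ∈ s, g x ≤ A) : eLpNorm g q (μ.restrict s) ≤ A := by
  have hμ : μ.restrict s ≠ 0 := fun h => by simp [Measure.restrict_eq_zero.1 h] at hμs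
  calc eLpNorm g q (μ.restrict s) ≤ eLpNorm (fun _ => A) q (μ.restrict s) :=
        eLpNorm_restrict_mono_of_le hs hA
    _ = A := by
        rw [eLpNorm_const A hq hμ, Measure.restrict_apply_univ, hμs, ENNReal.one_rpow, mul_one,
          enorm_eq_self]

end eLpNorm

/-- `y` changes at most exponentially, at rate `p` and up to the factor `D`. Such a function may be
sampled at the integers without changing the size of its `L_q` quasi-norm. -/
def IsModerate (p : ℝ) (D : ℝ≥0) (y : ℝ → ℝ≥0∞) : Prop :=
  ∀ x z, y x ≤ (D * nnexp (p * |x - z|) : ℝ≥0) * y z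

namespace IsModerate

variable {p p' : ℝ} {D D' : ℝ≥0} {y y' : ℝ → ℝ≥0∞}

lemma mul (hy : IsModerate p D y) (hy' : IsModerate p' D' y') :
    IsModerate (p + p') (D * D') fun x => y x * y' x := fun x z =>
  calc y x * y' x
      ≤ ((D * nnexp (p * |x - z|) : ℝ≥0) * y z) *
          ((D' * nnexp (p' * |x - z|) : ℝ≥0) * y' z) := by
        gcongr
        exacts [hy x z, hy' x z]
    _ = (D * D' * nnexp ((p + p') * |x - z|) : ℝ≥0) * (y z * y' z) := by
        rw [add_mul, nnexp_add]; push_cast; ring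

lemma le_of_abs_sub_le (hp : 0 ≤ p) (hy : IsModerate p D y) {x z B : ℝ} (h : |x - z| ≤ B) :
    y x ≤ (D * nnexp (p * B) : ℝ≥0) * y z := by
  refine (hy x z).trans ?_
  gcongr
  exact nnexp_le_nnexp.2 (by gcongr)

lemma le_floor (hp : 0 ≤ p) (hy : IsModerate p D y) (x : ℝ) :
    y x ≤ (D * nnexp p : ℝ≥0) * y ⌊x⌋ := by
  have h : |x - ⌊x⌋| ≤ 1 := by
    rw [abs_le]; constructor <;> linarith [Int.floor_le x, Int.lt_floor_add_one x]
  simpa only [mul_one] using hy.le_of_abs_sub_le hp h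

lemma floor_le (hp : 0 ≤ p) (hy : IsModerate p D y) (x : ℝ) :
    y ⌊x⌋ ≤ (D * nnexp p : ℝ≥0) * y x := by
  have h : |⌊x⌋ - x| ≤ 1 := by
    rw [abs_le]; constructor <;> linarith [Int.floor_le x, Int.lt_floor_add_one x]
  simpa only [mul_one] using hy.le_of_abs_sub_le hp h

end IsModerate

lemma isModerate_expKernel {γ : ℝ} (hγ : 0 ≤ γ) (z : ℝ) :
    IsModerate γ 1 fun x => (expKernel γ x z : ℝ≥0∞) := fun x x' => by
  rw [one_mul]
  beta_reduce
  exact mod_cast expKernel_le_nnexp_mul hγ x x' z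

section Discretisation

variable {q : ℝ≥0∞} {p : ℝ} {D : ℝ≥0} {y : ℝ → ℝ≥0∞}

lemma eLpNorm_volume_eq_eLpNorm_count (g : ℝ → ℝ≥0∞) :
    eLpNorm g q volume = eLpNorm
      (fun k : ℤ => eLpNorm g q (volume.restrict (Ico (k : ℝ) (k + 1)))) q Measure.count := by
  rw [← eLpNorm_restrict_iUnion (fun _ => measurableSet_Ico) (pairwise_disjoint_Ico_intCast ℝ),
    iUnion_Ico_intCast, Measure.restrict_univ]

lemma IsModerate.eLpNorm_le (hq : q ≠ 0) (hp : 0 ≤ p) (hy : IsModerate p D y) :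
    eLpNorm y q volume ≤ (D * nnexp p : ℝ≥0) * eLpNorm (fun k : ℤ => y k) q Measure.count := by
  rw [eLpNorm_volume_eq_eLpNorm_count,
    ← eLpNorm_const_mul_eq hq ENNReal.coe_ne_top]
  refine eLpNorm_mono_of_le fun k => eLpNorm_restrict_le_of_le hq measurableSet_Ico (by simp) ?_
  intro x hx
  simpa only [Int.floor_eq_iff.2 hx] using hy.le_floor hp x

lemma IsModerate.eLpNorm_count_le (hq : q ≠ 0) (hp : 0 ≤ p) (hy : IsModerate p D y) :
    eLpNorm (fun k : ℤ => y k) q Measure.count ≤ (D * nnexp p : ℝ≥0) * eLpNorm y q volume := by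
  rw [eLpNorm_volume_eq_eLpNorm_count, ← eLpNorm_const_mul_eq hq ENNReal.coe_ne_top]
  refine eLpNorm_mono_of_le fun k => ?_
  rw [← eLpNorm_const_mul_eq hq ENNReal.coe_ne_top]
  refine le_eLpNorm_restrict hq measurableSet_Ico (by simp) subset_rfl fun x hx => ?_
  simpa only [Int.floor_eq_iff.2 hx] using hy.floor_le hp x

lemma tsum_expKernel_ne_top {δ : ℝ} (hδ : 0 < δ) : ∑' k : ℤ, (expKernel δ k 0 : ℝ≥0∞) ≠ ∞ := by
  have hnat : Summable fun n : ℕ => Real.exp (n * -δ) :=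
    Real.summable_exp_nat_mul_iff.2 (neg_neg_of_pos hδ)
  have hint : Summable fun k : ℤ => Real.exp (-δ * |(k : ℝ) - 0|) := by
    refine .of_nat_of_neg (hnat.congr fun n => ?_) (hnat.congr fun n => ?_) <;> simp [mul_comm]
  exact hint.tsum_ofReal_ne_top

lemma tsum_expKernel_intCast (δ : ℝ) (j : ℤ) :
    ∑' k : ℤ, (expKernel δ k j : ℝ≥0∞) = ∑' k : ℤ, (expKernel δ k 0 : ℝ≥0∞) := by
  rw [← (Equiv.subRight j).tsum_eq fun k : ℤ => (expKernel δ k 0 : ℝ≥0∞)]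
  simp [expKernel]

-- Schur's test for the kernel `e^{-δ|k - φ i|}`, whose column sums are bounded uniformly in `φ`:
-- after dominating `sup_i` by the `ℓ_q` sum it works for `q < 1` as well.
lemma exists_eLpNorm_iSup_expKernel_le (hq : q ≠ 0) {δ : ℝ} (hδ : 0 < δ) :
    ∃ C : ℝ≥0, ∀ (φ : ℤ → ℤ) (x : ℤ → ℝ≥0∞),
      eLpNorm (fun k : ℤ => ⨆ i, expKernel δ k (φ i) * x i) q Measure.count ≤
        C * eLpNorm x q Measure.count := by
  rcases eq_or_ne q ∞ with rfl | hq'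
  · refine ⟨1, fun φ x => ?_⟩
    simp only [eLpNorm_top_eq_essSup, essSup_count, ENNReal.coe_one, one_mul]
    refine iSup_le fun k => iSup_mono fun i => ?_
    exact mul_le_of_le_one_left zero_le (mod_cast expKernel_le_one hδ.le _ _)
  have hp := ENNReal.toReal_pos hq hq'
  set p := q.toReal
  set S := ∑' k : ℤ, (expKernel (p * δ) k 0 : ℝ≥0∞)
  have hS : S ≠ ∞ := tsum_expKernel_ne_top (mul_pos hp hδ)
  have hker (u v : ℝ) : (expKernel δ u v : ℝ≥0∞) ^ p = expKernel (p * δ) u v := by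
    rw [← ENNReal.coe_rpow_of_nonneg _ hp.le, expKernel, nnexp_rpow, expKernel]; ring_nf
  refine ⟨S.toNNReal ^ (1 / p), fun φ x => ?_⟩
  rw [← ENNReal.rpow_le_rpow_iff hp, ENNReal.mul_rpow_of_nonneg _ _ hp.le,
    ← ENNReal.coe_rpow_of_nonneg _ hp.le, ← NNReal.rpow_mul, one_div_mul_cancel hp.ne',
    NNReal.rpow_one, ENNReal.coe_toNNReal hS, eLpNorm_rpow_toReal hq hq',
    eLpNorm_rpow_toReal hq hq', lintegral_count, lintegral_count]
  calc ∑' k : ℤ, (⨆ i, expKernel δ k (φ i) * x i) ^ p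
      ≤ ∑' k : ℤ, ∑' i, expKernel (p * δ) k (φ i) * x i ^ p := by
        refine ENNReal.tsum_le_tsum fun k => ?_
        rw [← ENNReal.le_rpow_inv_iff hp]
        refine iSup_le fun i => ?_
        rw [ENNReal.le_rpow_inv_iff hp, ENNReal.mul_rpow_of_nonneg _ _ hp.le, hker]
        exact ENNReal.le_tsum (f := fun i => expKernel (p * δ) k (φ i) * x i ^ p) i
    _ = ∑' i, (∑' k : ℤ, (expKernel (p * δ) k (φ i) : ℝ≥0∞)) * x i ^ p := by
        rw [ENNReal.tsum_comm]
        simp only [ENNReal.tsum_mul_right]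
    _ = S * ∑' i, x i ^ p := by
        simp only [tsum_expKernel_intCast, ENNReal.tsum_mul_left, S]

lemma exists_eLpNorm_expKernel_le (hq : q ≠ 0) {γ : ℝ} (hγ : 0 < γ) :
    ∃ C : ℝ≥0, ∀ z, eLpNorm (fun x => (expKernel γ x z : ℝ≥0∞)) q volume ≤ C := by
  obtain ⟨C, hC⟩ := exists_eLpNorm_iSup_expKernel_le hq hγ
  refine ⟨nnexp γ * (nnexp γ * C), fun z => ?_⟩
  let x : ℤ → ℝ≥0∞ := ({⌊z⌋} : Set ℤ).indicator fun _ => 1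
  have hx : eLpNorm x q Measure.count ≤ 1 :=
    (eLpNorm_indicator_const_le _ _).trans (by simp)
  have hle (k : ℤ) : (expKernel γ k z : ℝ≥0∞) ≤
      nnexp γ * ⨆ i : ℤ, expKernel γ k i * x i := by
    rw [expKernel_comm]
    refine (by simpa using (isModerate_expKernel hγ.le k).le_floor hγ.le z :
      (expKernel γ z k : ℝ≥0∞) ≤ nnexp γ * expKernel γ ⌊z⌋ k).trans ?_
    gcongr
    refine le_iSup_of_le ⌊z⌋ ?_
    simp [x, expKernel_comm γ k]
  calc eLpNorm (fun x => (expKernel γ x z : ℝ≥0∞)) q volume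
      ≤ nnexp γ * eLpNorm (fun k : ℤ => (expKernel γ k z : ℝ≥0∞)) q Measure.count :=
        by simpa using (isModerate_expKernel hγ.le z).eLpNorm_le hq hγ.le
    _ ≤ nnexp γ * (nnexp γ * (C * eLpNorm x q Measure.count)) := by
        gcongr
        exact (eLpNorm_le_mul_of_le hq _ hle).trans (by gcongr; exact hC id x)
    _ ≤ (nnexp γ * (nnexp γ * C) : ℝ≥0) := by
        push_cast
        gcongr
        exact mul_le_of_le_one_right' hx

end Discretisation

/-- The Peetre-type maximal function `x ↦ sup_z e^{-δ|x - z|} y z`. On moderate functions it takes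
the place of the Hardy operators. -/
def kernelSup (δ : ℝ) (y : ℝ → ℝ≥0∞) (x : ℝ) : ℝ≥0∞ := ⨆ z, expKernel δ x z * y z

section Operators

variable {q : ℝ≥0∞} {p p' δ : ℝ} {D D' : ℝ≥0}

lemma isModerate_kernelSup (hδ : 0 ≤ δ) (y : ℝ → ℝ≥0∞) : IsModerate δ 1 (kernelSup δ y) := by
  intro x x'
  refine iSup_le fun z => ?_
  rw [one_mul, kernelSup]
  calc expKernel δ x z * y z ≤ nnexp (δ * |x - x'|) * expKernel δ x' z * y z := by
        gcongr
        exact mod_cast expKernel_le_nnexp_mul hδ x x' z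
    _ ≤ nnexp (δ * |x - x'|) * ⨆ z, expKernel δ x' z * y z := by
        rw [mul_assoc]
        gcongr
        exact le_iSup (fun z => expKernel δ x' z * y z) z

lemma exists_eLpNorm_le_of_le_iSup (hq : q ≠ 0) (hδ : 0 < δ) (hp : 0 ≤ p) (hp' : 0 ≤ p')
    (D D' K : ℝ≥0) :
    ∃ C : ℝ≥0, ∀ (J : ℤ → ℤ) (y y' : ℝ → ℝ≥0∞), IsModerate p D y → IsModerate p' D' y' →
      (∀ k : ℤ, y' k ≤ K * ⨆ i : ℤ, expKernel δ k (J i) * y i) →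
      eLpNorm y' q volume ≤ C * eLpNorm y q volume := by
  obtain ⟨C, hC⟩ := exists_eLpNorm_iSup_expKernel_le hq hδ
  refine ⟨D' * nnexp p' * (K * (C * (D * nnexp p))), fun J y y' hy hy' hJ => ?_⟩
  calc eLpNorm y' q volume
      ≤ (D' * nnexp p' : ℝ≥0) * eLpNorm (fun k : ℤ => y' k) q Measure.count :=
        hy'.eLpNorm_le hq hp'
    _ ≤ (D' * nnexp p' : ℝ≥0) * (K * (C * eLpNorm (fun i : ℤ => y i) q Measure.count)) := by
        gcongr
        exact (eLpNorm_le_mul_of_le hq K hJ).trans (by gcongr; exact hC J _)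
    _ ≤ (D' * nnexp p' : ℝ≥0) * (K * (C * ((D * nnexp p : ℝ≥0) * eLpNorm y q volume))) := by
        gcongr
        exact hy.eLpNorm_count_le hq hp
    _ = _ := by push_cast; ring

lemma exists_eLpNorm_kernelSup_le (hq : q ≠ 0) (hδ : 0 < δ) (hp : 0 ≤ p) (D : ℝ≥0) :
    ∃ C : ℝ≥0, ∀ y, IsModerate p D y →
      eLpNorm (kernelSup δ y) q volume ≤ C * eLpNorm y q volume := by
  obtain ⟨C, hC⟩ := exists_eLpNorm_le_of_le_iSup hq hδ hp hδ.le D 1 (nnexp δ * (D * nnexp p))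
  refine ⟨C, fun y hy => hC id y _ hy (isModerate_kernelSup hδ.le y) fun k => iSup_le fun z => ?_⟩
  have hker := (isModerate_expKernel hδ.le k).le_floor hδ.le z
  rw [one_mul] at hker
  calc expKernel δ k z * y z
      ≤ (nnexp δ * expKernel δ k ⌊z⌋) * ((D * nnexp p : ℝ≥0) * y ⌊z⌋) := by
        rw [expKernel_comm δ k, expKernel_comm δ k]
        gcongr
        exact hy.le_floor hp z
    _ = (nnexp δ * (D * nnexp p) : ℝ≥0) * (expKernel δ k ⌊z⌋ * y ⌊z⌋) := by
        push_cast; ring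
    _ ≤ _ := by
        gcongr
        exact le_iSup (fun i : ℤ => expKernel δ k i * y i) ⌊z⌋

-- The hypothesis on `φ` bounds the diameter of the fibres of `k ↦ ⌊φ k⌋`, so any choice of one
-- element `J i` in each fibre satisfies `|k - J ⌊φ k⌋| ≤ B`.
lemma exists_eLpNorm_comp_le (hq : q ≠ 0) (hp : 0 ≤ p) (hp' : 0 ≤ p') (D D' : ℝ≥0) {φ : ℝ → ℝ}
    {B : ℝ} (hφ : ∀ x z, |φ x - φ z| ≤ 1 → |x - z| ≤ B) :
    ∃ C : ℝ≥0, ∀ y, IsModerate p D y → IsModerate p' D' (y ∘ φ) →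
      eLpNorm (y ∘ φ) q volume ≤ C * eLpNorm y q volume := by
  obtain ⟨C, hC⟩ := exists_eLpNorm_le_of_le_iSup hq one_pos hp hp' D D' (D * nnexp p * nnexp B)
  let J : ℤ → ℤ := Function.invFun fun k : ℤ => ⌊φ k⌋
  have hJ (k : ℤ) : 1 ≤ nnexp B * expKernel 1 k (J ⌊φ k⌋) := by
    have hfloor : ⌊φ k⌋ = ⌊φ (J ⌊φ k⌋)⌋ :=
      (Function.invFun_eq (f := fun k : ℤ => ⌊φ k⌋) ⟨k, rfl⟩).symm
    rw [expKernel, ← nnexp_add, ← nnexp_zero, nnexp_le_nnexp]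
    linarith [hφ _ _ (Int.abs_sub_lt_one_of_floor_eq_floor hfloor).le]
  refine ⟨C, fun y hy hyφ => hC J y _ hy hyφ fun k => ?_⟩
  calc y (φ k) ≤ (D * nnexp p : ℝ≥0) * y ⌊φ k⌋ := hy.le_floor hp _
    _ ≤ (D * nnexp p : ℝ≥0) * ((nnexp B * expKernel 1 k (J ⌊φ k⌋) : ℝ≥0) * y ⌊φ k⌋) := by
        gcongr
        exact le_mul_of_one_le_left' (mod_cast hJ k)
    _ = (D * nnexp p * nnexp B : ℝ≥0) * (expKernel 1 k (J ⌊φ k⌋) * y ⌊φ k⌋) := by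
        push_cast; ring
    _ ≤ _ := by
        gcongr
        exact le_iSup (fun i : ℤ => expKernel 1 k (J i) * y i) ⌊φ k⌋

lemma exists_eLpNorm_restrict_le_of_le_expKernel (hq : q ≠ 0) (hδ : 0 < δ) :
    ∃ C : ℝ≥0, ∀ (s : Set ℝ) (z : ℝ) (A : ℝ≥0∞) (g : ℝ → ℝ≥0∞), MeasurableSet s →
      (∀ x ∈ s, g x ≤ expKernel δ x z * A) → eLpNorm g q (volume.restrict s) ≤ C * A := by
  obtain ⟨C, hC⟩ := exists_eLpNorm_expKernel_le hq hδ
  refine ⟨C + 1, fun s z A g hs hg => ?_⟩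
  rcases eq_or_ne A ∞ with rfl | hA
  · rw [ENNReal.mul_top (by simp)]
    exact le_top
  calc eLpNorm g q (volume.restrict s)
      ≤ eLpNorm (fun x => A * expKernel δ x z) q (volume.restrict s) :=
        eLpNorm_restrict_mono_of_le hs fun x hx => (hg x hx).trans_eq (mul_comm _ _)
    _ = A * eLpNorm (fun x => (expKernel δ x z : ℝ≥0∞)) q (volume.restrict s) :=
        eLpNorm_const_mul_eq hq hA _
    _ ≤ A * C := by
        gcongr
        exact (eLpNorm_mono_measure _ Measure.restrict_le_self).trans (hC z)
    _ ≤ (C + 1 : ℝ≥0) * A := by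
        rw [mul_comm]
        gcongr
        exact le_self_add

lemma exists_eLpNorm_restrict_le_of_Ioi (hq : q ≠ 0) (hδ : 0 < δ) :
    ∃ C : ℝ≥0, ∀ (s : Set ℝ) (z : ℝ) (A : ℝ≥0∞) (g : ℝ → ℝ≥0∞), MeasurableSet s →
      (∀ x ∈ s, x ≤ z → g x ≤ expKernel δ x z * A) → eLpNorm g q (volume.restrict (Ioi z)) ≤ A →
      eLpNorm g q (volume.restrict s) ≤ C * A := by
  obtain ⟨C₁, hC₁⟩ := exists_eLpNorm_restrict_le_of_le_expKernel hq hδ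
  obtain ⟨C₂, hC₂⟩ := exists_eLpNorm_restrict_union_le (α := ℝ) (μ := volume) q
  refine ⟨C₂ * (C₁ + 1), fun s z A g hs hleft hright => ?_⟩
  have hsub : s ⊆ (s ∩ Iic z) ∪ Ioi z := fun x hx => by
    rcases le_or_gt x z with h | h
    exacts [.inl ⟨hx, h⟩, .inr h]
  calc eLpNorm g q (volume.restrict s)
      ≤ eLpNorm g q (volume.restrict ((s ∩ Iic z) ∪ Ioi z)) :=
        eLpNorm_mono_measure g (Measure.restrict_mono hsub le_rfl)
    _ ≤ C₂ * (eLpNorm g q (volume.restrict (s ∩ Iic z)) + eLpNorm g q (volume.restrict (Ioi z))) :=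
        hC₂ _ _ _
    _ ≤ C₂ * (C₁ * A + A) := by
        gcongr
        exact hC₁ _ z A g (hs.inter measurableSet_Iic) fun x hx => hleft x hx.1 hx.2
    _ = (C₂ * (C₁ + 1) : ℝ≥0) * A := by push_cast; ring

end Operators

/-- The slopes of `w` over long intervals lie in `[α, β]`. For `w x = log (f (eˣ))` this says that
`f t / t ^ α` is equivalent to a non-decreasing and `f t / t ^ β` to a non-increasing function. -/
def HasSlopes (w : ℝ → ℝ) (α β : ℝ) : Prop :=
  ∃ C : ℝ, ∀ x y, x ≤ y → α * (y - x) - C ≤ w y - w x ∧ w y - w x ≤ β * (y - x) + C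

/-- The logarithmic form of slow variation, for a weight `b` and `w x = log (b (eˣ))`. -/
def IsFlat (w : ℝ → ℝ) : Prop := ∀ ε > 0, HasSlopes w (-ε) ε

/-- The slopes of `w` lie strictly between `-1` and `0`, so that the weight `e^w` belongs to an
interpolation method of function-parameter type that stays away from both endpoints. -/
def IsInterior (w : ℝ → ℝ) : Prop := ∃ γ ∈ Ioo (0 : ℝ) 1, HasSlopes w (γ - 1) (-γ)

namespace HasSlopes

variable {v w : ℝ → ℝ} {α α' β β' : ℝ}

lemma mono (h : HasSlopes w α β) (hα : α' ≤ α) (hβ : β ≤ β') : HasSlopes w α' β' := by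
  obtain ⟨C, hC⟩ := h
  refine ⟨C, fun x y hxy => ?_⟩
  have hxy' := sub_nonneg.2 hxy
  constructor
  · linarith [(hC x y hxy).1, mul_le_mul_of_nonneg_right hα hxy']
  · linarith [(hC x y hxy).2, mul_le_mul_of_nonneg_right hβ hxy']

lemma add (hv : HasSlopes v α β) (hw : HasSlopes w α' β') :
    HasSlopes (fun x => v x + w x) (α + α') (β + β') := by
  obtain ⟨C, hC⟩ := hv
  obtain ⟨C', hC'⟩ := hw
  refine ⟨C + C', fun x y hxy => ?_⟩
  constructor <;> linarith [(hC x y hxy).1, (hC' x y hxy).1, (hC x y hxy).2, (hC' x y hxy).2]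

lemma neg (h : HasSlopes w α β) : HasSlopes (fun x => -w x) (-β) (-α) := by
  obtain ⟨C, hC⟩ := h
  refine ⟨C, fun x y hxy => ?_⟩
  constructor <;> linarith [(hC x y hxy).1, (hC x y hxy).2]

lemma const_mul_id (m : ℝ) : HasSlopes (fun x => m * x) m m :=
  ⟨0, fun x y _ => by constructor <;> linarith⟩

lemma abs_sub_le (h : HasSlopes w α β) :
    ∃ C, ∀ x z, |w x - w z| ≤ max |α| |β| * |x - z| + C := by
  obtain ⟨C, hC⟩ := h
  refine ⟨C, fun x z => ?_⟩
  wlog hxz : x ≤ z generalizing x z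
  · rw [abs_sub_comm (w x), abs_sub_comm x]
    exact this z x (le_of_not_ge hxz)
  have hxz' := sub_nonneg.2 hxz
  rw [abs_sub_comm x, abs_of_nonneg hxz', abs_sub_comm, abs_le]
  have h₁ : -max |α| |β| ≤ α := by linarith [neg_abs_le α, le_max_left |α| |β|]
  have h₂ : β ≤ max |α| |β| := (le_abs_self β).trans (le_max_right _ _)
  constructor
  · linarith [(hC x z hxz).1, mul_le_mul_of_nonneg_right h₁ hxz']
  · linarith [(hC x z hxz).2, mul_le_mul_of_nonneg_right h₂ hxz']

lemma comp (hv : HasSlopes v α β) (hw : HasSlopes w α' β') (hα : 0 ≤ α) (hβ : 0 ≤ β)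
    (hα' : 0 ≤ α') : HasSlopes (fun x => v (w x)) (α * α') (β * β') := by
  obtain ⟨C₀, hC₀⟩ := hv.abs_sub_le
  obtain ⟨C, hC⟩ := hv
  obtain ⟨C', hC'⟩ := hw
  set M := max |α| |β|
  have hM : 0 ≤ M := by positivity
  have hC_nonneg : 0 ≤ C := by linarith [(hC 0 0 le_rfl).2]
  have hC₀_nonneg : 0 ≤ C₀ := by simpa using hC₀ 0 0
  have hC'_nonneg : 0 ≤ C' := by linarith [(hC' 0 0 le_rfl).2]
  have hnear (a b : ℝ) (hab : a - C' ≤ b) :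
      α * (b - a) - (C + M * C' + C₀ + β * C') ≤ v b - v a ∧
        v b - v a ≤ β * (b - a) + (C + M * C' + C₀ + β * C') := by
    have hMC := mul_nonneg hM hC'_nonneg
    have hβC := mul_nonneg hβ hC'_nonneg
    rcases le_total a b with h | h
    · constructor <;> linarith [(hC a b h).1, (hC a b h).2]
    have hab' : |b - a| ≤ C' := by rw [abs_le]; constructor <;> linarith
    have hv := abs_le.1 ((hC₀ b a).trans (by gcongr : _ ≤ M * C' + C₀))
    constructor
    · linarith [mul_nonneg hα (sub_nonneg.2 h)]
    · linarith [mul_le_mul_of_nonneg_left (abs_le.1 hab').1 hβ]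
  refine ⟨C + M * C' + C₀ + β * C' + (α + β) * C', fun x y hxy => ?_⟩
  obtain ⟨hw₁, hw₂⟩ := hC' x y hxy
  have hnear' := hnear (w x) (w y)
    (by linarith [mul_nonneg hα' (sub_nonneg.2 hxy)])
  have hαC := mul_nonneg hα hC'_nonneg
  have hβC := mul_nonneg hβ hC'_nonneg
  constructor
  · linarith [hnear'.1, mul_le_mul_of_nonneg_left hw₁ hα]
  · linarith [hnear'.2, mul_le_mul_of_nonneg_left hw₂ hβ]

lemma isModerate (h : HasSlopes w α β) :
    ∃ p ≥ 0, ∃ D : ℝ≥0, IsModerate p D fun x => (nnexp (w x) : ℝ≥0∞) := by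
  obtain ⟨C, hC⟩ := h.abs_sub_le
  refine ⟨max |α| |β|, by positivity, nnexp C, fun x z => ?_⟩
  rw [← nnexp_add]
  beta_reduce
  rw [← ENNReal.coe_mul, ← nnexp_add, ENNReal.coe_le_coe, nnexp_le_nnexp]
  linarith [hC x z, le_abs_self (w x - w z)]

lemma exists_nnexp_le_mul_expKernel {γ : ℝ} (h : HasSlopes w (γ - 1) (-γ)) :
    ∃ C : ℝ≥0, ∀ x z, nnexp (w z - w x + min (z - x) 0) ≤ C * expKernel γ z x := by
  obtain ⟨C, hC⟩ := h
  refine ⟨nnexp C, fun x z => ?_⟩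
  rcases le_total z x with hzx | hxz
  · rw [min_eq_left (sub_nonpos.2 hzx), expKernel_of_le hzx, ← nnexp_add, nnexp_le_nnexp]
    linarith [(hC z x hzx).1]
  · rw [min_eq_right (sub_nonneg.2 hxz), expKernel_comm, expKernel_of_le hxz, ← nnexp_add,
      nnexp_le_nnexp]
    linarith [(hC x z hxz).2]

lemma exists_isModerate_comp (h : HasSlopes w α β) {p : ℝ} (hp : 0 ≤ p) (D : ℝ≥0) :
    ∃ p' ≥ 0, ∃ D' : ℝ≥0, ∀ y, IsModerate p D y → IsModerate p' D' (y ∘ w) := by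
  obtain ⟨C, hC⟩ := h.abs_sub_le
  refine ⟨p * max |α| |β|, by positivity, D * nnexp (p * C), fun y hy x z => ?_⟩
  refine (hy (w x) (w z)).trans ?_
  rw [mul_assoc D, ← nnexp_add]
  gcongr ((D * ?_ : ℝ≥0) : ℝ≥0∞) * _
  rw [nnexp_le_nnexp]
  linarith [mul_le_mul_of_nonneg_left (hC x z) hp]

lemma mul_abs_sub_le (h : HasSlopes w α β) : ∃ C, ∀ x z, α * |x - z| ≤ |w x - w z| + C := by
  obtain ⟨C, hC⟩ := h
  refine ⟨C, fun x z => ?_⟩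
  wlog hxz : x ≤ z generalizing x z
  · rw [abs_sub_comm (w x), abs_sub_comm x]
    exact this z x (le_of_not_ge hxz)
  rw [abs_sub_comm x, abs_of_nonneg (sub_nonneg.2 hxz), abs_sub_comm]
  linarith [(hC x z hxz).1, le_abs_self (w z - w x)]

lemma exists_quasiInverse (h : HasSlopes w α β) (hα : 0 < α) :
    ∃ (σ : ℝ → ℝ) (B : ℝ), ∀ x, |w (σ x) - x| ≤ B := by
  obtain ⟨C, hC⟩ := h
  have hex (x : ℝ) : ∃ j : ℤ, w j ≤ x ∧ x < w (j + 1) := by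
    have hbdd : ∃ b : ℤ, ∀ j : ℤ, w j ≤ x → j ≤ b := by
      obtain ⟨n, hn⟩ := exists_nat_ge ((x + C - w 0) / α)
      rw [div_le_iff₀' hα] at hn
      refine ⟨n, fun j hj => ?_⟩
      rcases le_total j 0 with h | h
      · exact h.trans (Int.natCast_nonneg n)
      · have hj' := (hC 0 j (mod_cast h)).1
        have : (j : ℝ) ≤ n := le_of_mul_le_mul_left (by linarith) hα
        exact_mod_cast this
    have hne : ∃ j : ℤ, w j ≤ x := by
      obtain ⟨n, hn⟩ := exists_nat_ge ((w 0 + C - x) / α)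
      rw [div_le_iff₀' hα] at hn
      refine ⟨-n, ?_⟩
      have hn' := (hC (-n) 0 (neg_nonpos.2 n.cast_nonneg)).1
      push_cast
      linarith
    obtain ⟨j, hj, hmax⟩ := Int.exists_greatest_of_bdd hbdd hne
    refine ⟨j, hj, lt_of_not_ge fun hlt => ?_⟩
    have := hmax (j + 1) (by push_cast; exact hlt)
    omega
  choose σ hσ using hex
  refine ⟨fun x => σ x, β + C, fun x => ?_⟩
  have hstep := (hC (σ x) (σ x + 1) (by linarith)).2
  rw [abs_le]
  constructor <;> linarith [hσ x]

end HasSlopes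

namespace IsFlat

variable {v w : ℝ → ℝ} {α β ε : ℝ}

lemma add (hv : IsFlat v) (hw : IsFlat w) : IsFlat fun x => v x + w x := fun ε hε =>
  ((hv _ (half_pos hε)).add (hw _ (half_pos hε))).mono (by linarith) (by linarith)

lemma neg (hw : IsFlat w) : IsFlat fun x => -w x := fun ε hε =>
  (hw ε hε).neg.mono le_rfl (by linarith)

lemma add_hasSlopes (hv : IsFlat v) (hw : HasSlopes w α β) (hε : 0 < ε) :
    HasSlopes (fun x => v x + w x) (α - ε) (β + ε) :=
  ((hv ε hε).add hw).mono (by linarith) (by linarith)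

lemma isInterior_sub_mul {θ : ℝ} (hv : IsFlat v) (hθ : 0 < θ) (hθ' : θ < 1) :
    IsInterior fun x => v x + -θ * x := by
  have : 0 < 1 - θ := sub_pos.2 hθ'
  set ε := min θ (1 - θ) / 2
  have hε : 0 < ε := by positivity
  have hεθ : ε + ε ≤ θ := by simp only [ε, add_halves, min_le_left]
  have hεθ' : ε + ε ≤ 1 - θ := by simp only [ε, add_halves, min_le_right]
  exact ⟨ε, ⟨hε, by linarith⟩, (hv.add_hasSlopes (.const_mul_id (-θ)) hε).mono (by linarith)
    (by linarith)⟩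

end IsFlat

section ChangeOfVariables

variable {q : ℝ≥0∞} {p α β : ℝ} {ρ : ℝ → ℝ}

lemma exists_eLpNorm_comp_le_of_hasSlopes (hq : q ≠ 0) (hp : 0 ≤ p) (D : ℝ≥0)
    (hρ : HasSlopes ρ α β) (hα : 0 < α) :
    ∃ C : ℝ≥0, ∀ y, IsModerate p D y → eLpNorm (y ∘ ρ) q volume ≤ C * eLpNorm y q volume := by
  obtain ⟨p', hp', D', hcomp⟩ := hρ.exists_isModerate_comp hp D
  obtain ⟨B, hB⟩ := hρ.mul_abs_sub_le
  have hfibre (x z : ℝ) (h : |ρ x - ρ z| ≤ 1) : |x - z| ≤ (1 + B) / α := by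
    rw [le_div_iff₀ hα]
    linarith [hB x z]
  obtain ⟨C, hC⟩ := exists_eLpNorm_comp_le hq hp hp' D D' hfibre
  exact ⟨C, fun y hy => hC y hy (hcomp y hy)⟩

lemma exists_eLpNorm_le_comp_of_hasSlopes (hq : q ≠ 0) (hp : 0 ≤ p) (D : ℝ≥0)
    (hρ : HasSlopes ρ α β) (hα : 0 < α) :
    ∃ C : ℝ≥0, ∀ y, IsModerate p D y → eLpNorm y q volume ≤ C * eLpNorm (y ∘ ρ) q volume := by
  obtain ⟨σ, B, hσ⟩ := hρ.exists_quasiInverse hα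
  obtain ⟨p', hp', D', hcomp⟩ := hρ.exists_isModerate_comp hp D
  obtain ⟨M, hM⟩ := hρ.abs_sub_le
  have hfibre (x z : ℝ) (h : |σ x - σ z| ≤ 1) : |x - z| ≤ max |α| |β| + M + 2 * B := by
    have hρσ : |ρ (σ x) - ρ (σ z)| ≤ max |α| |β| + M :=
      (hM (σ x) (σ z)).trans (by gcongr; exact mul_le_of_le_one_right (by positivity) h)
    rw [abs_le] at hρσ ⊢
    constructor <;> linarith [abs_le.1 (hσ x), abs_le.1 (hσ z)]
  set K := D * nnexp (p * B)
  have hle {y : ℝ → ℝ≥0∞} (hy : IsModerate p D y) (x : ℝ) : y x ≤ K * y (ρ (σ x)) :=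
    hy.le_of_abs_sub_le hp (by rw [abs_sub_comm]; exact hσ x)
  have hge {y : ℝ → ℝ≥0∞} (hy : IsModerate p D y) (x : ℝ) : y (ρ (σ x)) ≤ K * y x :=
    hy.le_of_abs_sub_le hp (hσ x)
  have hmod {y : ℝ → ℝ≥0∞} (hy : IsModerate p D y) :
      IsModerate p (K * D * K) ((y ∘ ρ) ∘ σ) := fun x z => by
    calc y (ρ (σ x)) ≤ K * ((D * nnexp (p * |x - z|) : ℝ≥0) * (K * y (ρ (σ z)))) := by
          refine (hge hy x).trans ?_
          gcongr
          refine (hy x z).trans ?_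
          gcongr
          exact hle hy z
      _ = (K * D * K * nnexp (p * |x - z|) : ℝ≥0) * y (ρ (σ z)) := by push_cast; ring
  obtain ⟨C, hC⟩ := exists_eLpNorm_comp_le hq hp' hp D' (K * D * K) hfibre
  refine ⟨K * C, fun y hy => ?_⟩
  calc eLpNorm y q volume ≤ K * eLpNorm ((y ∘ ρ) ∘ σ) q volume := eLpNorm_le_mul_of_le hq K (hle hy)
    _ ≤ K * (C * eLpNorm (y ∘ ρ) q volume) := by gcongr; exact hC _ (hcomp y hy) (hmod hy)
    _ = (K * C : ℝ≥0) * eLpNorm (y ∘ ρ) q volume := by push_cast; ring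

end ChangeOfVariables

/-- `c` is the logarithm of the tail quasi-norm `‖e^b‖_{r,(x,∞)}` of the weight `e^b`. -/
def IsLogTail (r : ℝ≥0∞) (b c : ℝ → ℝ) : Prop :=
  ∀ x, (nnexp (c x) : ℝ≥0∞) = eLpNorm (fun z => (nnexp (b z) : ℝ≥0∞)) r (volume.restrict (Ioi x))

section Tail

variable {r : ℝ≥0∞} {b c : ℝ → ℝ}

lemma IsFlat.exists_nnexp_le_eLpNorm_Ioi (hb : IsFlat b) (hr : r ≠ 0) :
    ∃ C : ℝ≥0, ∀ x, nnexp (b x) ≤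
      C * eLpNorm (fun z => (nnexp (b z) : ℝ≥0∞)) r (volume.restrict (Ioi x)) := by
  obtain ⟨C, hC⟩ := hb 1 one_pos
  refine ⟨nnexp (1 + C), fun x => ?_⟩
  rw [← eLpNorm_const_mul_eq hr ENNReal.coe_ne_top]
  refine le_eLpNorm_restrict hr (s := Ioo x (x + 1)) measurableSet_Ioo (by simp)
    Ioo_subset_Ioi_self fun z hz => ?_
  rw [← ENNReal.coe_mul, ← nnexp_add, ENNReal.coe_le_coe, nnexp_le_nnexp]
  linarith [(hC x z hz.1.le).1, hz.2]

lemma IsFlat.exists_eLpNorm_Ioi_le (hb : IsFlat b) (hr : r ≠ 0) {ε : ℝ} (hε : 0 < ε) :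
    ∃ C : ℝ≥0, ∀ x y, x ≤ y →
      eLpNorm (fun z => (nnexp (b z) : ℝ≥0∞)) r (volume.restrict (Ioi x)) ≤
        (C * nnexp (ε * (y - x)) : ℝ≥0) *
          eLpNorm (fun z => (nnexp (b z) : ℝ≥0∞)) r (volume.restrict (Ioi y)) := by
  obtain ⟨C₁, hC₁⟩ := hb.exists_nnexp_le_eLpNorm_Ioi hr
  obtain ⟨C₂, hC₂⟩ := hb _ (half_pos hε)
  obtain ⟨C₃, hC₃⟩ := exists_eLpNorm_restrict_le_of_Ioi hr (half_pos hε)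
  refine ⟨C₃ * (nnexp C₂ * C₁ + 1), fun x y hxy => ?_⟩
  set T := eLpNorm (fun z => (nnexp (b z) : ℝ≥0∞)) r (volume.restrict (Ioi y))
  set A := ((nnexp C₂ * C₁ + 1) * nnexp (ε * (y - x)) : ℝ≥0) * T with hA
  have hright : T ≤ A := by
    refine le_mul_of_one_le_left' (mod_cast one_le_mul le_add_self ?_)
    rw [← nnexp_zero, nnexp_le_nnexp]
    exact mul_nonneg hε.le (sub_nonneg.2 hxy)
  refine (hC₃ (Ioi x) y A _ measurableSet_Ioi (fun z hz hzy => ?_) hright).trans_eq ?_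
  · have hz' : nnexp (b z) ≤
        expKernel (ε / 2) z y * nnexp (ε * (y - x)) * nnexp C₂ * nnexp (b y) := by
      rw [expKernel_of_le hzy, ← nnexp_add, ← nnexp_add, ← nnexp_add, nnexp_le_nnexp]
      linarith [(hC₂ z y hzy).1, mul_le_mul_of_nonneg_left (le_of_lt hz) hε.le]
    calc (nnexp (b z) : ℝ≥0∞)
        ≤ (expKernel (ε / 2) z y * nnexp (ε * (y - x)) * nnexp C₂ : ℝ≥0) * (C₁ * T) :=
          (ENNReal.coe_le_coe.2 hz').trans (by push_cast; gcongr; exact hC₁ y)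
      _ = expKernel (ε / 2) z y * ((nnexp C₂ * C₁ * nnexp (ε * (y - x)) : ℝ≥0) * T) := by
          push_cast; ring
      _ ≤ expKernel (ε / 2) z y * A := by
          rw [hA]
          gcongr
          exact le_self_add
  · rw [hA]; push_cast; ring

lemma IsFlat.isLogTail_log (hb : IsFlat b) (hr : r ≠ 0) {x₀ : ℝ}
    (hfin : eLpNorm (fun z => (nnexp (b z) : ℝ≥0∞)) r (volume.restrict (Ioi x₀)) ≠ ∞) :
    IsLogTail r b fun x =>
      Real.log (eLpNorm (fun z => (nnexp (b z) : ℝ≥0∞)) r (volume.restrict (Ioi x))).toReal := by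
  intro x
  obtain ⟨C₁, hC₁⟩ := hb.exists_nnexp_le_eLpNorm_Ioi hr
  obtain ⟨C₂, hC₂⟩ := hb.exists_eLpNorm_Ioi_le hr one_pos
  set T := eLpNorm (fun z => (nnexp (b z) : ℝ≥0∞)) r (volume.restrict (Ioi x)) with hT
  have hpos : T ≠ 0 := fun h => by
    have := hC₁ x
    rw [← hT, h, mul_zero, nonpos_iff_eq_zero, ENNReal.coe_eq_zero, nnexp,
      Real.toNNReal_eq_zero] at this
    exact (Real.exp_pos _).not_ge this
  have hlt : T ≠ ∞ := by
    rcases le_total x x₀ with h | h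
    · exact ne_top_of_le_ne_top (ENNReal.mul_ne_top ENNReal.coe_ne_top hfin) (hC₂ x x₀ h)
    · exact ne_top_of_le_ne_top hfin
        (eLpNorm_mono_measure _ (Measure.restrict_mono (Ioi_subset_Ioi h) le_rfl))
  rw [nnexp_log (ENNReal.toReal_pos hpos hlt), ENNReal.ofReal_toReal hlt]

lemma IsLogTail.exists_nnexp_le (hb : IsFlat b) (hr : r ≠ 0) (hc : IsLogTail r b c) :
    ∃ C : ℝ≥0, ∀ x, nnexp (b x) ≤ C * nnexp (c x) := by
  obtain ⟨C, hC⟩ := hb.exists_nnexp_le_eLpNorm_Ioi hr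
  exact ⟨C, fun x => by exact_mod_cast (hc x).symm ▸ hC x⟩

lemma IsLogTail.antitone (hc : IsLogTail r b c) : Antitone c := fun x y hxy => by
  rw [← nnexp_le_nnexp, ← ENNReal.coe_le_coe, hc, hc]
  exact eLpNorm_mono_measure _ (Measure.restrict_mono (Ioi_subset_Ioi hxy) le_rfl)

lemma IsLogTail.isFlat (hb : IsFlat b) (hr : r ≠ 0) (hc : IsLogTail r b c) : IsFlat c := by
  intro ε hε
  obtain ⟨C, hC⟩ := hb.exists_eLpNorm_Ioi_le hr hε
  have hC' : C ≤ nnexp C := by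
    rw [← NNReal.coe_le_coe, coe_nnexp]
    linarith [Real.add_one_le_exp (C : ℝ)]
  refine ⟨C, fun x y hxy => ⟨?_, ?_⟩⟩
  · have h : nnexp (c x) ≤ nnexp (C + ε * (y - x) + c y) := by
      rw [nnexp_add, nnexp_add]
      refine le_trans (?_ : _ ≤ C * nnexp (ε * (y - x)) * nnexp (c y)) (by gcongr)
      exact_mod_cast (hc x).symm ▸ (hc y).symm ▸ hC x y hxy
    linarith [nnexp_le_nnexp.1 h]
  · linarith [hc.antitone hxy, mul_nonneg hε.le (sub_nonneg.2 hxy), C.coe_nonneg]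

end Tail

/-- An extended quasi-norm on an abelian group; the quasi-normed space it defines is the subgroup
on which it is finite. -/
structure IsQuasiNorm {F : Type*} [AddCommGroup F] (N : F → ℝ≥0∞) : Prop where
  zero : N 0 = 0
  neg : ∀ f, N (-f) = N f
  exists_add_le : ∃ C : ℝ≥0, ∀ f g, N (f + g) ≤ C * (N f + N g)

lemma QuasiBanach.isQuasiNorm {F : Type*} [AddCommGroup F] [Module ℝ F] (A : QuasiBanach F) :
    IsQuasiNorm A.N where
  zero := A.zero
  neg f := by simpa using A.smul (-1) f
  exists_add_le := by
    obtain ⟨C, -, hC, h⟩ := A.quasi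
    exact ⟨C.toNNReal, by simpa only [ENNReal.coe_toNNReal hC] using h⟩

/-- The K-functional of `f` as a function of the logarithmic variable `x = log t`. -/
def logKf {F : Type*} [AddCommGroup F] (N₀ N₁ : F → ℝ≥0∞) (f : F) (x : ℝ) : ℝ≥0∞ :=
  Kf N₀ N₁ (Real.exp x) f

section KFunctional

variable {F : Type*} [AddCommGroup F] {N₀ N₁ : F → ℝ≥0∞}

lemma logKf_le (f g : F) (x : ℝ) : logKf N₀ N₁ f x ≤ N₀ g + nnexp x * N₁ (f - g) :=
  iInf_le _ g

lemma le_logKf {f : F} {x : ℝ} {A : ℝ≥0∞} (h : ∀ g, A ≤ N₀ g + nnexp x * N₁ (f - g)) :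
    A ≤ logKf N₀ N₁ f x :=
  le_iInf h

lemma le_mul_logKf {C : ℝ≥0} {f : F} {x : ℝ} {A : ℝ≥0∞}
    (h : ∀ g, A ≤ C * (N₀ g + nnexp x * N₁ (f - g))) : A ≤ C * logKf N₀ N₁ f x := by
  rw [logKf, Kf, ENNReal.mul_iInf (absurd · ENNReal.coe_ne_top)]
  exact le_iInf h

lemma monotone_logKf (f : F) : Monotone (logKf N₀ N₁ f) := fun x z hxz =>
  le_logKf fun g => (logKf_le f g x).trans (by gcongr; exact nnexp_le_nnexp.2 hxz)

lemma isModerate_logKf (f : F) : IsModerate 1 1 (logKf N₀ N₁ f) := fun x z => by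
  rw [one_mul, one_mul, ← neg_neg |x - z|, ← nnexp_mul_le_iff]
  refine le_logKf fun g => ?_
  calc nnexp (-|x - z|) * logKf N₀ N₁ f x
      ≤ nnexp (-|x - z|) * N₀ g + (nnexp (-|x - z|) * nnexp x : ℝ≥0) * N₁ (f - g) := by
        rw [ENNReal.coe_mul, mul_assoc, ← mul_add]
        gcongr
        exact logKf_le f g x
    _ ≤ N₀ g + nnexp z * N₁ (f - g) := by
        rw [← nnexp_add]
        gcongr
        · refine mul_le_of_le_one_left' (mod_cast ?_)
          rw [← nnexp_zero, nnexp_le_nnexp]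
          exact neg_nonpos.2 (abs_nonneg _)
        · rw [nnexp_le_nnexp]
          linarith [le_abs_self (x - z)]

lemma logKf_le_left (h₁ : N₁ 0 = 0) (f : F) (x : ℝ) : logKf N₀ N₁ f x ≤ N₀ f := by
  simpa only [sub_self, h₁, mul_zero, add_zero] using logKf_le (N₀ := N₀) (N₁ := N₁) f f x

lemma logKf_le_right (h₀ : N₀ 0 = 0) (f : F) (x : ℝ) : logKf N₀ N₁ f x ≤ nnexp x * N₁ f := by
  simpa only [sub_zero, h₀, zero_add] using logKf_le (N₀ := N₀) (N₁ := N₁) f 0 x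

lemma logKf_sub_le (h₀ : N₀ 0 = 0) (f g : F) (x z : ℝ) :
    logKf N₀ N₁ (f - g) z ≤ nnexp (z - x) * (N₀ g + nnexp x * N₁ (f - g)) :=
  calc logKf N₀ N₁ (f - g) z ≤ nnexp z * N₁ (f - g) := logKf_le_right h₀ _ _
    _ = nnexp (z - x) * (nnexp x * N₁ (f - g)) := by
        rw [← mul_assoc, ← ENNReal.coe_mul, ← nnexp_add, sub_add_cancel]
    _ ≤ _ := by gcongr; exact le_add_self

lemma exists_logKf_add_le (h₀ : IsQuasiNorm N₀) (h₁ : IsQuasiNorm N₁) :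
    ∃ C : ℝ≥0, ∀ f g x,
      logKf N₀ N₁ (f + g) x ≤ C * (logKf N₀ N₁ f x + logKf N₀ N₁ g x) := by
  obtain ⟨C₀, hC₀⟩ := h₀.exists_add_le
  obtain ⟨C₁, hC₁⟩ := h₁.exists_add_le
  refine ⟨max C₀ C₁, fun f g x => ?_⟩
  simp only [logKf, Kf, ENNReal.iInf_add, ENNReal.add_iInf,
    ENNReal.mul_iInf (absurd · ENNReal.coe_ne_top)]
  refine le_iInf₂ fun g₀ f₀ => (logKf_le _ (f₀ + g₀) x).trans ?_
  calc N₀ (f₀ + g₀) + nnexp x * N₁ (f + g - (f₀ + g₀))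
      ≤ max C₀ C₁ * (N₀ f₀ + N₀ g₀) +
          nnexp x * (max C₀ C₁ * (N₁ (f - f₀) + N₁ (g - g₀))) := by
        rw [add_sub_add_comm]
        gcongr
        · exact (hC₀ _ _).trans (by gcongr; exact le_max_left _ _)
        · exact (hC₁ _ _).trans (by gcongr; exact le_max_right _ _)
    _ = max C₀ C₁ * (N₀ f₀ + nnexp x * N₁ (f - f₀) + (N₀ g₀ + nnexp x * N₁ (g - g₀))) := by ring

lemma logKf_neg (h₀ : IsQuasiNorm N₀) (h₁ : IsQuasiNorm N₁) (f : F) (x : ℝ) :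
    logKf N₀ N₁ (-f) x = logKf N₀ N₁ f x := by
  refine (Equiv.neg F).iInf_congr fun g => ?_
  rw [Equiv.neg_apply, h₀.neg, ← h₁.neg (f - -g), neg_sub, neg_sub_comm]

lemma exists_logKf_le_add_sub (h₀ : IsQuasiNorm N₀) (h₁ : IsQuasiNorm N₁) :
    ∃ C : ℝ≥0, ∀ f g x,
      logKf N₀ N₁ f x ≤ C * (logKf N₀ N₁ g x + logKf N₀ N₁ (f - g) x) ∧
      logKf N₀ N₁ g x ≤ C * (logKf N₀ N₁ f x + logKf N₀ N₁ (f - g) x) ∧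
      logKf N₀ N₁ (f - g) x ≤ C * (logKf N₀ N₁ f x + logKf N₀ N₁ g x) := by
  obtain ⟨C, hC⟩ := exists_logKf_add_le h₀ h₁
  refine ⟨C, fun f g x => ⟨?_, ?_, ?_⟩⟩
  · simpa only [add_sub_cancel] using hC g (f - g) x
  · simpa only [← sub_eq_add_neg, _root_.sub_sub_cancel, logKf_neg h₀ h₁] using hC f (-(f - g)) x
  · simpa only [← sub_eq_add_neg, logKf_neg h₀ h₁] using hC f (-g) x

end KFunctional

section TailNorms

variable {r : ℝ≥0∞} {b c : ℝ → ℝ}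

lemma IsLogTail.mul_le_eLpNorm (hc : IsLogTail r b c) (hr : r ≠ 0) {y : ℝ → ℝ≥0∞}
    (hy : Monotone y) (x : ℝ) :
    nnexp (c x) * y x ≤ eLpNorm (fun z => nnexp (b z) * y z) r volume := by
  rw [mul_comm, hc]
  refine (mul_eLpNorm_le hr _ _).trans ((eLpNorm_restrict_mono_of_le measurableSet_Ioi
    fun z hz => ?_).trans (eLpNorm_mono_measure _ Measure.restrict_le_self))
  rw [mul_comm]
  gcongr
  exact hy (le_of_lt hz)

lemma IsLogTail.exists_eLpNorm_le (hc : IsLogTail r b c) (hr : r ≠ 0) (hb : IsFlat b) {δ : ℝ}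
    (hδ : 0 < δ) :
    ∃ C : ℝ≥0, ∀ (x : ℝ) (A : ℝ≥0∞) (y : ℝ → ℝ≥0∞),
      (∀ z ≤ x, nnexp (c z) * y z ≤ expKernel δ z x * A) → (∀ z ≥ x, nnexp (c x) * y z ≤ A) →
      eLpNorm (fun z => nnexp (b z) * y z) r volume ≤ C * A := by
  obtain ⟨C₁, hC₁⟩ := hc.exists_nnexp_le hb hr
  obtain ⟨C₂, hC₂⟩ := exists_eLpNorm_restrict_le_of_Ioi hr hδ
  refine ⟨C₂ * (C₁ + 1) + 1, fun x A y hleft hright => ?_⟩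
  rcases eq_or_ne A ∞ with rfl | hA
  · rw [ENNReal.mul_top (by simp)]
    exact le_top
  have hIoi : eLpNorm (fun z => nnexp (b z) * y z) r (volume.restrict (Ioi x)) ≤ A := by
    calc eLpNorm (fun z => nnexp (b z) * y z) r (volume.restrict (Ioi x))
        ≤ eLpNorm (fun z => nnexp (-c x) * A * nnexp (b z)) r (volume.restrict (Ioi x)) := by
          refine eLpNorm_restrict_mono_of_le measurableSet_Ioi fun z hz => ?_
          rw [mul_comm]
          gcongr
          exact nnexp_mul_le_iff.1 (hright z (le_of_lt hz))
      _ = nnexp (-c x) * A * nnexp (c x) := by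
          rw [eLpNorm_const_mul_eq hr (ENNReal.mul_ne_top ENNReal.coe_ne_top hA), hc]
      _ = A := by
          rw [mul_right_comm, ← ENNReal.coe_mul, nnexp_neg_mul_nnexp, ENNReal.coe_one, one_mul]
  have hIic (z : ℝ) (hz : z ≤ x) :
      nnexp (b z) * y z ≤ expKernel δ z x * ((C₁ + 1 : ℝ≥0) * A) := by
    calc nnexp (b z) * y z ≤ (C₁ * nnexp (c z) : ℝ≥0) * y z := by gcongr; exact hC₁ z
      _ ≤ C₁ * (expKernel δ z x * A) := by
          rw [ENNReal.coe_mul, mul_assoc]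
          gcongr C₁ * ?_
          exact hleft z hz
      _ = expKernel δ z x * (C₁ * A) := by ring
      _ ≤ _ := by gcongr; exact le_self_add
  have h := hC₂ univ x _ _ .univ (fun z _ => hIic z)
    (hIoi.trans (le_mul_of_one_le_left' (mod_cast le_add_self)))
  rw [Measure.restrict_univ] at h
  calc _ ≤ _ := h
    _ = (C₂ * (C₁ + 1) : ℝ≥0) * A := by push_cast; ring
    _ ≤ _ := by gcongr; exact le_self_add

lemma IsFlat.exists_nnexp_mul_expKernel_le {w : ℝ → ℝ} (hw : IsFlat w) {δ δ' : ℝ} (hδ : δ' < δ) :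
    ∃ C : ℝ≥0, ∀ u x, nnexp (w u) * expKernel δ u x ≤ C * (nnexp (w x) * expKernel δ' u x) := by
  obtain ⟨C, hC⟩ := (hw _ (sub_pos.2 hδ)).abs_sub_le
  rw [abs_neg, max_self, abs_of_pos (sub_pos.2 hδ)] at hC
  refine ⟨nnexp C, fun u x => ?_⟩
  rw [expKernel, expKernel, ← nnexp_add, ← nnexp_add, ← nnexp_add, nnexp_le_nnexp]
  linarith [hC u x, le_abs_self (w u - w x)]

lemma IsLogTail.exists_eLpNorm_eLpNorm_Iio_le (hc : IsLogTail r b c) (hr : r ≠ 0) (hb : IsFlat b)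
    {q : ℝ≥0∞} (hq : q ≠ 0) (φ : ℝ → ℝ) {δ : ℝ} (hδ : 0 < δ) :
    ∃ C : ℝ≥0, ∀ (x : ℝ) (A : ℝ≥0∞) (y : ℝ → ℝ≥0∞),
      (∀ z, nnexp (c x + φ z) * y z ≤ expKernel δ z x * A) →
      eLpNorm (fun u => nnexp (b u) *
        eLpNorm (fun z => nnexp (φ z) * y z) q (volume.restrict (Iio u))) r volume ≤ C * A := by
  obtain ⟨C₁, hC₁⟩ := exists_eLpNorm_restrict_le_of_le_expKernel hq hδ
  obtain ⟨C₂, hC₂⟩ := (hc.isFlat hb hr).exists_nnexp_mul_expKernel_le (half_lt_self hδ)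
  obtain ⟨C₃, hC₃⟩ := hc.exists_eLpNorm_le hr hb (half_pos hδ)
  refine ⟨C₃ * ((C₂ + 1) * C₁), fun x A y hy => ?_⟩
  set I := fun u => eLpNorm (fun z => nnexp (φ z) * y z) q (volume.restrict (Iio u)) with hI
  have hpull (u : ℝ) : nnexp (c x) * I u =
      eLpNorm (fun z => nnexp (c x + φ z) * y z) q (volume.restrict (Iio u)) := by
    rw [hI, ← eLpNorm_const_mul_eq hq ENNReal.coe_ne_top]
    simp only [nnexp_add, ENNReal.coe_mul, mul_assoc]
  have hright (u : ℝ) : nnexp (c x) * I u ≤ C₁ * A :=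
    (hpull u).trans_le (hC₁ _ x A _ measurableSet_Iio fun z _ => hy z)
  have hleft (u : ℝ) (hu : u ≤ x) : I u ≤ nnexp (-c x) * (expKernel δ u x * (C₁ * A)) := by
    rw [← nnexp_mul_le_iff, hpull, mul_left_comm]
    refine hC₁ _ u _ _ measurableSet_Iio fun z hz => (hy z).trans_eq ?_
    rw [← mul_assoc, ← ENNReal.coe_mul, ← expKernel_eq_mul hz.le hu]
  refine (hC₃ x ((C₂ + 1) * C₁ * A) I (fun u hu => ?_) fun u _ => ?_).trans_eq
    (by push_cast; ring)
  · calc nnexp (c u) * I u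
        ≤ nnexp (c u) * (nnexp (-c x) * (expKernel δ u x * (C₁ * A))) := by
          gcongr
          exact hleft u hu
      _ = nnexp (-c x) * (nnexp (c u) * expKernel δ u x : ℝ≥0) * (C₁ * A) := by push_cast; ring
      _ ≤ nnexp (-c x) * (C₂ * (nnexp (c x) * expKernel (δ / 2) u x) : ℝ≥0) * (C₁ * A) := by
          gcongr _ * ((?_ : ℝ≥0) : ℝ≥0∞) * _
          exact hC₂ u x
      _ = (nnexp (-c x) * nnexp (c x) : ℝ≥0) * (expKernel (δ / 2) u x * (C₂ * C₁ * A)) := by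
          push_cast; ring
      _ ≤ expKernel (δ / 2) u x * ((C₂ + 1) * C₁ * A) := by
          rw [nnexp_neg_mul_nnexp, ENNReal.coe_one, one_mul]
          gcongr
          exact le_self_add
  · refine (hright u).trans ?_
    rw [mul_assoc]
    exact le_mul_of_one_le_left' le_add_self

end TailNorms

/-- The quasi-norm of the interpolation space with function parameter `e^w`, in logarithmic
variables: `Ā_{θ,q;b}` is the case `w x = -θ x + log (b (eˣ))`. -/
def weightedK {F : Type*} [AddCommGroup F] (N₀ N₁ : F → ℝ≥0∞) (q : ℝ≥0∞) (w : ℝ → ℝ) (f : F) :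
    ℝ≥0∞ :=
  eLpNorm (fun x => nnexp (w x) * logKf N₀ N₁ f x) q volume

/-- The quasi-norm of the limiting space with outer weight `e^β` and inner weight `e^φ`, in
logarithmic variables: `Ā^𝓛_{σ,r,b,q,a}` is the case `β x = log (b (eˣ) / a (eˣ))`,
`φ x = -σ x + log (a (eˣ))`. -/
def limitingK {F : Type*} [AddCommGroup F] (N₀ N₁ : F → ℝ≥0∞) (r q : ℝ≥0∞) (β φ : ℝ → ℝ) (f : F) :
    ℝ≥0∞ :=
  eLpNorm (fun x => nnexp (β x) *
    eLpNorm (fun z => nnexp (φ z) * logKf N₀ N₁ f z) q (volume.restrict (Iio x))) r volume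

section Holmstedt

variable {F : Type*} [AddCommGroup F] {N₀ N₁ : F → ℝ≥0∞} {r₀ r₁ q₁ : ℝ≥0∞}
  {b₀ c₀ β d φ : ℝ → ℝ} {γ : ℝ}

lemma IsLogTail.mul_logKf_le_weightedK (hc₀ : IsLogTail r₀ b₀ c₀) (hr₀ : r₀ ≠ 0) (f : F) (x : ℝ) :
    nnexp (c₀ x) * logKf N₀ N₁ f x ≤ weightedK N₀ N₁ r₀ b₀ f :=
  hc₀.mul_le_eLpNorm hr₀ (monotone_logKf f) x

lemma IsLogTail.exists_mul_logKf_le_limitingK (hd : IsLogTail r₁ β d) (hr₁ : r₁ ≠ 0)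
    (hq₁ : q₁ ≠ 0) {α₁ α₂ : ℝ} (hφ : HasSlopes φ α₁ α₂) :
    ∃ C : ℝ≥0, ∀ (f : F) x,
      nnexp (φ x + d x) * logKf N₀ N₁ f x ≤ C * limitingK N₀ N₁ r₁ q₁ β φ f := by
  obtain ⟨p, hp, D, hmod⟩ := hφ.isModerate
  set C := D * 1 * nnexp ((p + 1) * 1)
  refine ⟨C, fun f x => ?_⟩
  set y := fun z => nnexp (φ z) * logKf N₀ N₁ f z
  set I := fun u => eLpNorm y q₁ (volume.restrict (Iio u))
  have hI : Monotone I := fun u v huv =>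
    eLpNorm_mono_measure _ (Measure.restrict_mono (Iio_subset_Iio huv) le_rfl)
  have hy : y x ≤ C * I x := by
    rw [← eLpNorm_const_mul_eq hq₁ ENNReal.coe_ne_top]
    refine le_eLpNorm_restrict hq₁ (s := Ioo (x - 1) x) measurableSet_Ioo (by simp)
      Ioo_subset_Iio_self fun z hz => ?_
    refine (hmod.mul (isModerate_logKf f)).le_of_abs_sub_le (by positivity) ?_
    rw [abs_of_nonneg (sub_nonneg.2 hz.2.le)]
    linarith [hz.1]
  calc nnexp (φ x + d x) * logKf N₀ N₁ f x = nnexp (d x) * y x := by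
        rw [nnexp_add, ENNReal.coe_mul]; ring
    _ ≤ nnexp (d x) * (C * I x) := by gcongr
    _ = C * (nnexp (d x) * I x) := mul_left_comm _ _ _
    _ ≤ C * limitingK N₀ N₁ r₁ q₁ β φ f := by
        gcongr
        exact hd.mul_le_eLpNorm hr₁ hI x

lemma exists_mul_logKf_le_logKf (h₀ : IsQuasiNorm N₀) (h₁ : IsQuasiNorm N₁) (hr₀ : r₀ ≠ 0)
    (hr₁ : r₁ ≠ 0) (hq₁ : q₁ ≠ 0) (hc₀ : IsLogTail r₀ b₀ c₀) (hd : IsLogTail r₁ β d) {α₁ α₂ : ℝ}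
    (hφ : HasSlopes φ α₁ α₂) :
    ∃ C : ℝ≥0, ∀ (f : F) x, nnexp (c₀ x) * logKf N₀ N₁ f x ≤
      C * logKf (weightedK N₀ N₁ r₀ b₀) (limitingK N₀ N₁ r₁ q₁ β φ) f (c₀ x - φ x - d x) := by
  obtain ⟨C₁, hC₁⟩ := exists_logKf_le_add_sub h₀ h₁
  obtain ⟨C₂, hC₂⟩ := hd.exists_mul_logKf_le_limitingK (N₀ := N₀) (N₁ := N₁) hr₁ hq₁ hφ
  refine ⟨C₁ * (C₂ + 1), fun f x => ?_⟩
  refine le_mul_logKf fun g => ?_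
  calc nnexp (c₀ x) * logKf N₀ N₁ f x
      ≤ nnexp (c₀ x) * (C₁ * (logKf N₀ N₁ g x + logKf N₀ N₁ (f - g) x)) := by
        gcongr
        exact (hC₁ f g x).1
    _ = C₁ * (nnexp (c₀ x) * logKf N₀ N₁ g x + nnexp (c₀ x - φ x - d x) *
          (nnexp (φ x + d x) * logKf N₀ N₁ (f - g) x)) := by
        rw [← mul_assoc (nnexp (c₀ x - φ x - d x) : ℝ≥0∞), ← ENNReal.coe_mul, ← nnexp_add]
        ring_nf
    _ ≤ C₁ * (weightedK N₀ N₁ r₀ b₀ g + nnexp (c₀ x - φ x - d x) *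
          (C₂ * limitingK N₀ N₁ r₁ q₁ β φ (f - g))) := by
        gcongr _ * (?_ + _ * ?_)
        · exact hc₀.mul_logKf_le_weightedK hr₀ g x
        · exact hC₂ (f - g) x
    _ ≤ (C₁ * (C₂ + 1) : ℝ≥0) * (weightedK N₀ N₁ r₀ b₀ g + nnexp (c₀ x - φ x - d x) *
          limitingK N₀ N₁ r₁ q₁ β φ (f - g)) := by
        push_cast
        rw [mul_assoc, mul_add (C₂ + 1 : ℝ≥0∞), mul_left_comm (C₂ + 1 : ℝ≥0∞)]
        gcongr
        · exact le_mul_of_one_le_left' le_add_self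
        · exact le_self_add

lemma IsLogTail.exists_weightedK_le (hc₀ : IsLogTail r₀ b₀ c₀) (hr₀ : r₀ ≠ 0) (hb₀ : IsFlat b₀)
    (h₀ : IsQuasiNorm N₀) (h₁ : IsQuasiNorm N₁) (hγ : γ ∈ Ioo (0 : ℝ) 1) :
    ∃ C : ℝ≥0, ∀ (f g : F) x A, nnexp (c₀ x) * (N₀ g + nnexp x * N₁ (f - g)) ≤ A →
      (∀ z ≤ x, nnexp (c₀ z) * logKf N₀ N₁ f z ≤ expKernel γ z x * A) →
      weightedK N₀ N₁ r₀ b₀ g ≤ C * A := by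
  obtain ⟨C₁, hC₁⟩ := exists_logKf_le_add_sub h₀ h₁
  obtain ⟨C₂, hC₂⟩ := (hc₀.isFlat hb₀ hr₀).exists_nnexp_mul_expKernel_le hγ.2
  obtain ⟨C₃, hC₃⟩ := hc₀.exists_eLpNorm_le hr₀ hb₀ hγ.1
  refine ⟨C₃ * (C₁ * (1 + C₂) + 1), fun f g x A hA hf => ?_⟩
  set B := N₀ g + nnexp x * N₁ (f - g)
  refine (hC₃ x ((C₁ * (1 + C₂) + 1) * A) _ (fun z hz => ?_) fun z _ => ?_).trans_eq
    (by push_cast; ring)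
  · have hsub : nnexp (c₀ z) * logKf N₀ N₁ (f - g) z ≤ C₂ * (expKernel γ z x * A) :=
      calc nnexp (c₀ z) * logKf N₀ N₁ (f - g) z
          ≤ (nnexp (c₀ z) * expKernel 1 z x : ℝ≥0) * B := by
            rw [expKernel_of_le hz, one_mul, ENNReal.coe_mul, mul_assoc]
            gcongr
            exact logKf_sub_le h₀.zero f g x z
        _ ≤ (C₂ * (nnexp (c₀ x) * expKernel γ z x) : ℝ≥0) * B := by
            gcongr ((?_ : ℝ≥0) : ℝ≥0∞) * _
            exact hC₂ z x
        _ = C₂ * (expKernel γ z x * (nnexp (c₀ x) * B)) := by push_cast; ring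
        _ ≤ C₂ * (expKernel γ z x * A) := by gcongr
    calc nnexp (c₀ z) * logKf N₀ N₁ g z
        ≤ nnexp (c₀ z) * (C₁ * (logKf N₀ N₁ f z + logKf N₀ N₁ (f - g) z)) := by
          gcongr
          exact (hC₁ f g z).2.1
      _ = C₁ * (nnexp (c₀ z) * logKf N₀ N₁ f z + nnexp (c₀ z) * logKf N₀ N₁ (f - g) z) := by ring
      _ ≤ C₁ * (expKernel γ z x * A + C₂ * (expKernel γ z x * A)) := by
          gcongr _ * (?_ + ?_)
          exact hf z hz
      _ = expKernel γ z x * (C₁ * (1 + C₂) * A) := by ring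
      _ ≤ expKernel γ z x * ((C₁ * (1 + C₂) + 1) * A) := by gcongr; exact le_self_add
  · calc nnexp (c₀ x) * logKf N₀ N₁ g z ≤ nnexp (c₀ x) * B := by
          gcongr
          exact (logKf_le_left h₁.zero g z).trans le_self_add
      _ ≤ A := hA
      _ ≤ (C₁ * (1 + C₂) + 1) * A := le_mul_of_one_le_left' le_add_self

lemma HasSlopes.exists_mul_logKf_sub_le (hφ : HasSlopes φ (γ - 1) (-γ)) (h₀ : IsQuasiNorm N₀)
    (h₁ : IsQuasiNorm N₁) :
    ∃ C : ℝ≥0, ∀ (f g : F) c x A, nnexp c * (N₀ g + nnexp x * N₁ (f - g)) ≤ A →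
      (∀ z ≥ x, nnexp (c + (φ z - φ x)) * logKf N₀ N₁ f z ≤ expKernel γ z x * A) →
      ∀ z, nnexp (c + (φ z - φ x)) * logKf N₀ N₁ (f - g) z ≤ expKernel γ z x * (C * A) := by
  obtain ⟨C₁, hC₁⟩ := exists_logKf_le_add_sub h₀ h₁
  obtain ⟨C₂, hC₂⟩ := hφ.exists_nnexp_le_mul_expKernel
  refine ⟨C₁ * (1 + C₂) + C₂, fun f g c x A hA hf z => ?_⟩
  set B := N₀ g + nnexp x * N₁ (f - g)
  have hB {y : ℝ≥0∞} (hy : y ≤ nnexp (min (z - x) 0) * B) :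
      nnexp (c + (φ z - φ x)) * y ≤ expKernel γ z x * (C₂ * A) :=
    calc nnexp (c + (φ z - φ x)) * y
        ≤ nnexp (c + (φ z - φ x)) * (nnexp (min (z - x) 0) * B) := by gcongr
      _ = nnexp (φ z - φ x + min (z - x) 0) * (nnexp c * B) := by
          simp only [nnexp_add, ENNReal.coe_mul]; ring
      _ ≤ (C₂ * expKernel γ z x : ℝ≥0) * A := by gcongr; exact hC₂ x z
      _ = expKernel γ z x * (C₂ * A) := by push_cast; ring
  rcases le_total z x with hz | hz
  · refine (hB ?_).trans (by gcongr; exact le_add_self)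
    rw [min_eq_left (sub_nonpos.2 hz)]
    exact logKf_sub_le h₀.zero f g x z
  have hg : logKf N₀ N₁ g z ≤ nnexp (min (z - x) 0) * B := by
    rw [min_eq_right (sub_nonneg.2 hz), nnexp_zero, ENNReal.coe_one, one_mul]
    exact (logKf_le_left h₁.zero g z).trans le_self_add
  calc nnexp (c + (φ z - φ x)) * logKf N₀ N₁ (f - g) z
      ≤ nnexp (c + (φ z - φ x)) * (C₁ * (logKf N₀ N₁ f z + logKf N₀ N₁ g z)) := by
        gcongr
        exact (hC₁ f g z).2.2
    _ = C₁ * (nnexp (c + (φ z - φ x)) * logKf N₀ N₁ f z +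
          nnexp (c + (φ z - φ x)) * logKf N₀ N₁ g z) := by ring
    _ ≤ C₁ * (expKernel γ z x * A + expKernel γ z x * (C₂ * A)) := by
        gcongr _ * (?_ + ?_)
        exacts [hf z hz, hB hg]
    _ = expKernel γ z x * ((C₁ * (1 + C₂) : ℝ≥0) * A) := by push_cast; ring
    _ ≤ expKernel γ z x * ((C₁ * (1 + C₂) + C₂ : ℝ≥0) * A) := by gcongr; exact le_self_add

lemma IsLogTail.exists_mul_limitingK_le (hd : IsLogTail r₁ β d) (hr₁ : r₁ ≠ 0) (hβ : IsFlat β)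
    (hq₁ : q₁ ≠ 0) (h₀ : IsQuasiNorm N₀) (h₁ : IsQuasiNorm N₁) (hγ : 0 < γ)
    (hφ : HasSlopes φ (γ - 1) (-γ)) :
    ∃ C : ℝ≥0, ∀ (f g : F) c x A, nnexp c * (N₀ g + nnexp x * N₁ (f - g)) ≤ A →
      (∀ z ≥ x, nnexp (c - φ x - d x + (φ z + d z)) * logKf N₀ N₁ f z ≤ expKernel γ z x * A) →
      nnexp (c - φ x - d x) * limitingK N₀ N₁ r₁ q₁ β φ (f - g) ≤ C * A := by
  have hφ' : HasSlopes φ (γ / 2 - 1) (-(γ / 2)) := hφ.mono (by linarith) (by linarith)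
  obtain ⟨C₁, hC₁⟩ := hφ'.exists_mul_logKf_sub_le h₀ h₁
  obtain ⟨C₂, hC₂⟩ := (hd.isFlat hβ hr₁).exists_nnexp_mul_expKernel_le (half_lt_self hγ)
  obtain ⟨C₃, hC₃⟩ := hd.exists_eLpNorm_eLpNorm_Iio_le hr₁ hβ hq₁ φ (half_pos hγ)
  refine ⟨C₃ * (C₁ * (C₂ + 1)), fun f g c x A hA hf => ?_⟩
  have hf' (z : ℝ) (hz : x ≤ z) : nnexp (c + (φ z - φ x)) * logKf N₀ N₁ f z ≤
      expKernel (γ / 2) z x * ((C₂ + 1) * A) :=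
    calc nnexp (c + (φ z - φ x)) * logKf N₀ N₁ f z
        = nnexp (-d z + d x) * (nnexp (c - φ x - d x + (φ z + d z)) * logKf N₀ N₁ f z) := by
          rw [← mul_assoc, ← ENNReal.coe_mul, ← nnexp_add]
          ring_nf
      _ ≤ nnexp (-d z + d x) * (expKernel γ z x * A) := by gcongr _ * ?_; exact hf z hz
      _ = nnexp (-d z) * (nnexp (d x) * expKernel γ x z : ℝ≥0) * A := by
          rw [nnexp_add, expKernel_comm]; push_cast; ring
      _ ≤ nnexp (-d z) * (C₂ * (nnexp (d z) * expKernel (γ / 2) x z) : ℝ≥0) * A := by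
          gcongr _ * ((?_ : ℝ≥0) : ℝ≥0∞) * _
          exact hC₂ x z
      _ = (nnexp (-d z) * nnexp (d z) : ℝ≥0) * (expKernel (γ / 2) z x * (C₂ * A)) := by
          rw [expKernel_comm _ x]; push_cast; ring
      _ ≤ expKernel (γ / 2) z x * ((C₂ + 1) * A) := by
          rw [nnexp_neg_mul_nnexp, ENNReal.coe_one, one_mul]
          gcongr
          exact le_self_add
  have hsub := hC₁ f g c x ((C₂ + 1) * A) (hA.trans (le_mul_of_one_le_left' le_add_self)) hf'
  rw [nnexp_mul_le_iff]
  refine (hC₃ x (nnexp (-(c - φ x - d x)) * (C₁ * ((C₂ + 1) * A))) _ fun z => ?_).trans_eq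
    (by push_cast; ring)
  rw [mul_left_comm, ← nnexp_mul_le_iff, ← mul_assoc, ← ENNReal.coe_mul, ← nnexp_add]
  convert hsub z using 4
  ring

lemma exists_logKf_le (h₀ : IsQuasiNorm N₀) (h₁ : IsQuasiNorm N₁) (hr₀ : r₀ ≠ 0)
    (hr₁ : r₁ ≠ 0) (hq₁ : q₁ ≠ 0) (hb₀ : IsFlat b₀) (hβ : IsFlat β) (hc₀ : IsLogTail r₀ b₀ c₀)
    (hd : IsLogTail r₁ β d) (hγ : γ ∈ Ioo (0 : ℝ) 1) (hφ : HasSlopes φ (γ - 1) (-γ)) :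
    ∃ C : ℝ≥0, ∀ (f : F) x V,
      (∀ z ≤ x, nnexp (c₀ z) * logKf N₀ N₁ f z ≤ expKernel γ z x * V) →
      (∀ z ≥ x, nnexp (c₀ x - φ x - d x + (φ z + d z)) * logKf N₀ N₁ f z ≤
        expKernel γ z x * V) →
      logKf (weightedK N₀ N₁ r₀ b₀) (limitingK N₀ N₁ r₁ q₁ β φ) f (c₀ x - φ x - d x) ≤ C * V := by
  obtain ⟨C₁, hC₁⟩ := hc₀.exists_weightedK_le (N₀ := N₀) (N₁ := N₁) hr₀ hb₀ h₀ h₁ hγ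
  obtain ⟨C₂, hC₂⟩ := hd.exists_mul_limitingK_le (N₀ := N₀) (N₁ := N₁) hr₁ hβ hq₁ h₀ h₁ hγ.1 hφ
  refine ⟨(C₁ + C₂) * 2, fun f x V hleft hright => ?_⟩
  have hx : nnexp (c₀ x) * logKf N₀ N₁ f x ≤ V :=
    (hleft x le_rfl).trans (mul_le_of_le_one_left' (mod_cast expKernel_le_one hγ.1.le x x))
  have hsplit (g : F) :
      logKf (weightedK N₀ N₁ r₀ b₀) (limitingK N₀ N₁ r₁ q₁ β φ) f (c₀ x - φ x - d x) ≤
        (C₁ + C₂) * V + ((C₁ + C₂) * nnexp (c₀ x) : ℝ≥0) * (N₀ g + nnexp x * N₁ (f - g)) := by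
    set A := V + nnexp (c₀ x) * (N₀ g + nnexp x * N₁ (f - g)) with hA
    have hV (z : ℝ) : expKernel γ z x * V ≤ expKernel γ z x * A := by gcongr; exact le_self_add
    refine (logKf_le f g _).trans ?_
    calc _ ≤ C₁ * A + C₂ * A :=
          add_le_add (hC₁ f g x A le_add_self fun z hz => (hleft z hz).trans (hV z))
            (hC₂ f g (c₀ x) x A le_add_self fun z hz => (hright z hz).trans (hV z))
      _ = _ := by rw [hA]; push_cast; ring
  calc logKf (weightedK N₀ N₁ r₀ b₀) (limitingK N₀ N₁ r₁ q₁ β φ) f (c₀ x - φ x - d x)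
      ≤ (C₁ + C₂) * V + ((C₁ + C₂) * nnexp (c₀ x) : ℝ≥0) * logKf N₀ N₁ f x :=
        tsub_le_iff_left.1 (le_mul_logKf fun g => tsub_le_iff_left.2 (hsplit g))
    _ = (C₁ + C₂) * V + (C₁ + C₂) * (nnexp (c₀ x) * logKf N₀ N₁ f x) := by push_cast; ring
    _ ≤ (C₁ + C₂) * V + (C₁ + C₂) * V := by gcongr
    _ = ((C₁ + C₂) * 2 : ℝ≥0) * V := by push_cast; ring

end Holmstedt

/-- A Holmstedt-type description of the K-functional of the couple `(X₀, X₁)` in terms of that of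
`(N₀, N₁)`. By `lower`, `e^c` times the latter is dominated by the former along the change of
variables `P`; by `upper`, the converse holds as soon as the other values of the K-functional of
`(N₀, N₁)`, with the weight `e^c` to the left and `e^(c - P)` to the right, decay exponentially
(at a rate `γ` that may be taken small). -/
structure IsHolmstedt {F : Type*} [AddCommGroup F] (N₀ N₁ X₀ X₁ : F → ℝ≥0∞) (c P : ℝ → ℝ) :
    Prop where
  lower : ∃ C : ℝ≥0, ∀ f x, nnexp (c x) * logKf N₀ N₁ f x ≤ C * logKf X₀ X₁ f (P x)
  upper : ∃ γ₀ > 0, ∀ γ ∈ Ioc 0 γ₀, ∃ C : ℝ≥0, ∀ f x V,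
    (∀ z ≤ x, nnexp (c z) * logKf N₀ N₁ f z ≤ expKernel γ z x * V) →
    (∀ z ≥ x, nnexp (P x - P z + c z) * logKf N₀ N₁ f z ≤ expKernel γ z x * V) →
    logKf X₀ X₁ f (P x) ≤ C * V

lemma equivNorms_of_exists_le {F : Type*} {nX nY : F → ℝ≥0∞}
    (hXY : ∃ C : ℝ≥0, ∀ f, nX f ≤ C * nY f) (hYX : ∃ C : ℝ≥0, ∀ f, nY f ≤ C * nX f) :
    EquivNorms nX nY := by
  obtain ⟨C, hC⟩ := hXY
  obtain ⟨C', hC'⟩ := hYX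
  refine ⟨(C + C' + 1 : ℝ≥0), by positivity, ENNReal.coe_ne_top, fun f => ⟨?_, ?_⟩⟩
  · rw [ENNReal.inv_mul_le_iff (by positivity) ENNReal.coe_ne_top]
    refine (hC' f).trans ?_
    gcongr
    exact le_add_self.trans le_self_add
  · refine (hC f).trans ?_
    gcongr
    exact le_self_add.trans le_self_add

section Reiteration

variable {F : Type*} [AddCommGroup F] {N₀ N₁ X₀ X₁ : F → ℝ≥0∞} {c P w : ℝ → ℝ} {r : ℝ≥0∞}
  {α β : ℝ}

lemma HasSlopes.exists_le_expKernel {δ : ℝ} (h : HasSlopes w δ β) :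
    ∃ C : ℝ≥0, ∀ x z, x ≤ z → nnexp (w x - w z) ≤ C * expKernel δ x z := by
  obtain ⟨C, hC⟩ := h
  refine ⟨nnexp C, fun x z hxz => ?_⟩
  rw [expKernel_of_le hxz, ← nnexp_add, nnexp_le_nnexp]
  linarith [(hC x z hxz).1]

lemma IsHolmstedt.exists_weightedK_comp_le (h : IsHolmstedt N₀ N₁ X₀ X₁ c P) (hr : r ≠ 0)
    (hP : HasSlopes P α β) (hα : 0 < α) {α' β' : ℝ} (hw : HasSlopes w α' β') :
    ∃ C : ℝ≥0, ∀ f,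
      weightedK N₀ N₁ r (fun x => w (P x) + c x) f ≤ C * weightedK X₀ X₁ r w f := by
  obtain ⟨C, hC⟩ := h.lower
  obtain ⟨p, hp, D, hmod⟩ := hw.isModerate
  obtain ⟨C', hC'⟩ := exists_eLpNorm_comp_le_of_hasSlopes hr (add_nonneg hp zero_le_one) (D * 1)
    hP hα
  refine ⟨C * C', fun f => ?_⟩
  set G : ℝ → ℝ≥0∞ := fun x => nnexp (w x) * logKf X₀ X₁ f x
  have hle (x : ℝ) : nnexp (w (P x) + c x) * logKf N₀ N₁ f x ≤ C * G (P x) :=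
    calc nnexp (w (P x) + c x) * logKf N₀ N₁ f x
        = nnexp (w (P x)) * (nnexp (c x) * logKf N₀ N₁ f x) := by
          rw [nnexp_add, ENNReal.coe_mul, mul_assoc]
      _ ≤ nnexp (w (P x)) * (C * logKf X₀ X₁ f (P x)) := by
          gcongr _ * ?_
          exact hC f x
      _ = C * G (P x) := mul_left_comm _ _ _
  calc weightedK N₀ N₁ r (fun x => w (P x) + c x) f ≤ C * eLpNorm (G ∘ P) r volume :=
        eLpNorm_le_mul_of_le hr C hle
    _ ≤ C * (C' * eLpNorm G r volume) := by
        gcongr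
        exact hC' G (hmod.mul (isModerate_logKf f))
    _ = (C * C' : ℝ≥0) * weightedK X₀ X₁ r w f := by push_cast; rw [mul_assoc]; rfl

lemma IsHolmstedt.exists_mul_logKf_le_kernelSup (h : IsHolmstedt N₀ N₁ X₀ X₁ c P)
    (hP : HasSlopes P α β) (hα : 0 < α) (hw : IsInterior w) :
    ∃ δ > 0, ∃ C : ℝ≥0, ∀ f x, nnexp (w (P x)) * logKf X₀ X₁ f (P x) ≤
      C * kernelSup δ (fun z => nnexp (w (P z) + c z) * logKf N₀ N₁ f z) x := by
  obtain ⟨ε, ⟨hε, hε'⟩, hw⟩ := hw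
  obtain ⟨γ₀, hγ₀, hupper⟩ := h.upper
  set δ := min γ₀ (ε * α / 2)
  have hδ : 0 < δ := by positivity
  have hδ' : δ + δ ≤ ε * α := by linarith [min_le_right γ₀ (ε * α / 2)]
  obtain ⟨C₁, hC₁⟩ := ((hw.neg.comp hP (by linarith) (by linarith) hα.le).mono
    (by linarith : δ + δ ≤ _) le_rfl).exists_le_expKernel
  obtain ⟨C₂, hC₂⟩ := ((((HasSlopes.const_mul_id 1).add hw).comp hP (by linarith) (by linarith)
    hα.le).mono (by linarith : δ + δ ≤ _) le_rfl).exists_le_expKernel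
  obtain ⟨C₃, hC₃⟩ := hupper δ ⟨hδ, min_le_left _ _⟩
  refine ⟨δ, hδ, C₃ * (C₁ + C₂), fun f x => ?_⟩
  set y : ℝ → ℝ≥0∞ := fun z => nnexp (w (P z) + c z) * logKf N₀ N₁ f z
  set T := kernelSup δ y x
  have hdecay {m z : ℝ} {C : ℝ≥0} (hC : C ≤ C₁ + C₂)
      (hm : nnexp (m - c z + w (P x) - w (P z)) ≤ C * expKernel (δ + δ) z x) :
      nnexp m * logKf N₀ N₁ f z ≤
        expKernel δ z x * (nnexp (-w (P x)) * ((C₁ + C₂) * T)) := by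
    have hT : expKernel δ x z * y z ≤ T := le_iSup (fun z => expKernel δ x z * y z) z
    calc nnexp m * logKf N₀ N₁ f z
        = nnexp (-w (P x)) * nnexp (m - c z + w (P x) - w (P z)) * y z := by
          rw [← ENNReal.coe_mul, ← nnexp_add, ← mul_assoc, ← ENNReal.coe_mul, ← nnexp_add]
          ring_nf
      _ ≤ nnexp (-w (P x)) * (C * expKernel (δ + δ) z x : ℝ≥0) * y z := by gcongr
      _ = expKernel δ z x * (nnexp (-w (P x)) * (C * (expKernel δ x z * y z))) := by
          rw [expKernel_add, expKernel_comm δ x]; push_cast; ring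
      _ ≤ expKernel δ z x * (nnexp (-w (P x)) * ((C₁ + C₂) * T)) := by
          gcongr _ * (_ * (?_ * ?_))
          exact mod_cast hC
  rw [nnexp_mul_le_iff]
  refine (hC₃ f x _ (fun z hz => hdecay le_self_add ?_)
    fun z hz => hdecay le_add_self ?_).trans_eq (by push_cast; ring)
  · convert hC₁ z x hz using 2
    ring
  · convert hC₂ x z hz using 2
    · ring
    · exact expKernel_comm _ _ _

theorem IsHolmstedt.equivNorms_weightedK (h : IsHolmstedt N₀ N₁ X₀ X₁ c P) (hr : r ≠ 0)
    (hP : HasSlopes P α β) (hα : 0 < α) (hc : IsFlat c) (hw : IsInterior w) :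
    EquivNorms (weightedK X₀ X₁ r w) (weightedK N₀ N₁ r fun x => w (P x) + c x) := by
  obtain ⟨δ, hδ, C₁, hC₁⟩ := h.exists_mul_logKf_le_kernelSup hP hα hw
  obtain ⟨γ, ⟨hγ, hγ'⟩, hw⟩ := hw
  have hcomp := ((hw.neg.comp hP (by linarith) (by linarith) hα.le).neg).add (hc 1 one_pos)
  simp only [neg_neg] at hcomp
  obtain ⟨p, hp, D, hmod⟩ := hw.isModerate
  obtain ⟨p', hp', D', hmod'⟩ := hcomp.isModerate
  obtain ⟨C₂, hC₂⟩ := exists_eLpNorm_le_comp_of_hasSlopes hr (add_nonneg hp zero_le_one) (D * 1)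
    hP hα
  obtain ⟨C₃, hC₃⟩ := exists_eLpNorm_kernelSup_le hr hδ (add_nonneg hp' zero_le_one) (D' * 1)
  refine equivNorms_of_exists_le ⟨C₂ * (C₁ * C₃), fun f => ?_⟩
    (h.exists_weightedK_comp_le hr hP hα hw)
  set G : ℝ → ℝ≥0∞ := fun x => nnexp (w x) * logKf X₀ X₁ f x
  set y : ℝ → ℝ≥0∞ := fun x => nnexp (w (P x) + c x) * logKf N₀ N₁ f x
  calc eLpNorm G r volume
      ≤ C₂ * eLpNorm (G ∘ P) r volume := hC₂ G (hmod.mul (isModerate_logKf f))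
    _ ≤ C₂ * (C₁ * eLpNorm (kernelSup δ y) r volume) := by
        gcongr
        exact eLpNorm_le_mul_of_le hr C₁ (hC₁ f)
    _ ≤ C₂ * (C₁ * (C₃ * eLpNorm y r volume)) := by
        gcongr
        exact hC₃ y (hmod'.mul (isModerate_logKf f))
    _ = (C₂ * (C₁ * C₃) : ℝ≥0) * eLpNorm y r volume := by push_cast; ring

end Reiteration

section LimitingCouple

variable {F : Type*} [AddCommGroup F] {N₀ N₁ : F → ℝ≥0∞} {r₀ r₁ q₁ : ℝ≥0∞} {b₀ c₀ β d φ : ℝ → ℝ}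

lemma IsInterior.exists_hasSlopes_sub_sub (hφ : IsInterior φ) (hc : IsFlat c₀) (hd : IsFlat d) :
    ∃ α > 0, ∃ α', HasSlopes (fun x => c₀ x - φ x - d x) α α' := by
  obtain ⟨γ, ⟨hγ, -⟩, hφ⟩ := hφ
  refine ⟨γ - γ / 2, by linarith, 1 - γ + γ / 2, ?_⟩
  convert (hc.add hd.neg).add_hasSlopes hφ.neg (half_pos hγ) using 2 <;> ring

theorem isHolmstedt_weightedK_limitingK (h₀ : IsQuasiNorm N₀) (h₁ : IsQuasiNorm N₁) (hr₀ : r₀ ≠ 0)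
    (hr₁ : r₁ ≠ 0) (hq₁ : q₁ ≠ 0) (hb₀ : IsFlat b₀) (hβ : IsFlat β) (hc₀ : IsLogTail r₀ b₀ c₀)
    (hd : IsLogTail r₁ β d) (hφ : IsInterior φ) :
    IsHolmstedt N₀ N₁ (weightedK N₀ N₁ r₀ b₀) (limitingK N₀ N₁ r₁ q₁ β φ) c₀
      fun x => c₀ x - φ x - d x := by
  obtain ⟨γ₀, ⟨hγ₀, hγ₀'⟩, hφ⟩ := hφ
  refine ⟨exists_mul_logKf_le_logKf h₀ h₁ hr₀ hr₁ hq₁ hc₀ hd hφ, γ₀, hγ₀, fun γ hγ => ?_⟩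
  obtain ⟨C, hC⟩ := exists_logKf_le h₀ h₁ hr₀ hr₁ hq₁ hb₀ hβ hc₀ hd
    ⟨hγ.1, hγ.2.trans_lt hγ₀'⟩ (hφ.mono (by linarith [hγ.2]) (by linarith [hγ.2]))
  refine ⟨C, fun f x V hleft hright => hC f x V hleft fun z hz => ?_⟩
  convert hright z hz using 4
  ring

theorem equivNorms_weightedK_limitingK (h₀ : IsQuasiNorm N₀) (h₁ : IsQuasiNorm N₁) (hr₀ : r₀ ≠ 0)
    (hr₁ : r₁ ≠ 0) (hq₁ : q₁ ≠ 0) (hb₀ : IsFlat b₀) (hβ : IsFlat β) (hc₀ : IsLogTail r₀ b₀ c₀)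
    (hd : IsLogTail r₁ β d) (hφ : IsInterior φ) {r : ℝ≥0∞} (hr : r ≠ 0) {w : ℝ → ℝ}
    (hw : IsInterior w) :
    EquivNorms (weightedK (weightedK N₀ N₁ r₀ b₀) (limitingK N₀ N₁ r₁ q₁ β φ) r w)
      (weightedK N₀ N₁ r fun x => w (c₀ x - φ x - d x) + c₀ x) := by
  have hc₀' := hc₀.isFlat hb₀ hr₀
  obtain ⟨α, hα, α', hP⟩ := hφ.exists_hasSlopes_sub_sub hc₀' (hd.isFlat hβ hr₁)
  exact (isHolmstedt_weightedK_limitingK h₀ h₁ hr₀ hr₁ hq₁ hb₀ hβ hc₀ hd hφ).equivNorms_weightedK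
    hr hP hα hc₀' hw

end LimitingCouple

section LogarithmicVariable

variable {q : ℝ≥0∞} {b v : ℝ → ℝ}

lemma ofReal_rpow_mul_exp (hb : ∀ x, b (Real.exp x) = Real.exp (v x)) (s x : ℝ) :
    ENNReal.ofReal (Real.exp x ^ s * b (Real.exp x)) = nnexp (s * x + v x) := by
  rw [hb, ← Real.exp_mul, ← Real.exp_add, mul_comm x]
  rfl

lemma volume_restrict_exp_image {s : Set ℝ} (hs : MeasurableSet s) :
    volume.restrict (Real.exp '' s) =
      ((volume.restrict s).withDensity fun x => (nnexp x : ℝ≥0∞)).map Real.exp := by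
  rw [← map_withDensity_abs_det_fderiv_eq_addHaar volume hs.nullMeasurableSet
    (fun x _ => (Real.hasDerivAt_exp x).hasDerivWithinAt.hasFDerivWithinAt)
    Real.exp_injective.injOn]
  simp only [ContinuousLinearMap.det_toSpanSingleton, Real.abs_exp]
  rfl

lemma measurable_coe_nnexp : Measurable fun x => (nnexp x : ℝ≥0∞) :=
  Real.measurable_exp.ennreal_ofReal

lemma LqNorm_exp_image {s : Set ℝ} (hs : MeasurableSet s) (hq : q ≠ 0) {g h : ℝ → ℝ≥0∞}
    (hg : ∀ x, g (Real.exp x) = nnexp (-(q⁻¹.toReal) * x) * h x) :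
    LqNorm q (Real.exp '' s) g = eLpNorm h q (volume.restrict s) := by
  have hexp : MeasurableEmbedding Real.exp :=
    Real.continuous_exp.measurableEmbedding Real.exp_injective
  rw [LqNorm, volume_restrict_exp_image hs, hexp.lintegral_map,
    hexp.essSup_map_measure]
  split_ifs with hq'
  · subst hq'
    simp only [ENNReal.inv_top, ENNReal.toReal_zero, neg_zero, zero_mul, nnexp_zero,
      ENNReal.coe_one, one_mul] at hg
    rw [eLpNorm_top_eq_essSup]
    simp only [Function.comp_def, hg]
    refine le_antisymm (essSup_mono_measure (withDensity_absolutelyContinuous _ _))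
      (essSup_mono_measure (withDensity_absolutelyContinuous' ?_ ?_))
    · exact measurable_coe_nnexp.aemeasurable
    · exact .of_forall fun x => by simp [nnexp, Real.exp_pos]
  · rw [lintegral_withDensity_eq_lintegral_mul_non_measurable _ measurable_coe_nnexp (by simp)]
    have hp := ENNReal.toReal_pos hq hq'
    rw [eLpNorm_eq_lintegral_rpow_enorm_toReal hq hq', one_div, ENNReal.toReal_inv]
    refine congrArg (· ^ q.toReal⁻¹) (lintegral_congr fun x => ?_)
    rw [enorm_eq_self, Pi.mul_apply, hg, ENNReal.mul_rpow_of_nonneg _ _ hp.le,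
      ← ENNReal.coe_rpow_of_nonneg _ hp.le, nnexp_rpow, ← mul_assoc, ← ENNReal.coe_mul,
      ← nnexp_add, ENNReal.toReal_inv, ← mul_assoc, mul_neg, mul_inv_cancel₀ hp.ne', neg_one_mul,
      add_neg_cancel, nnexp_zero, ENNReal.coe_one, one_mul]

lemma LqNorm_Ioi_zero (hq : q ≠ 0) {g h : ℝ → ℝ≥0∞}
    (hg : ∀ x, g (Real.exp x) = nnexp (-(q⁻¹.toReal) * x) * h x) :
    LqNorm q (Ioi 0) g = eLpNorm h q volume := by
  rw [← Real.range_exp, ← image_univ, LqNorm_exp_image .univ hq hg, Measure.restrict_univ]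

lemma LqNorm_Ioi_svWgt (hb : ∀ x, b (Real.exp x) = Real.exp (v x)) (hq : q ≠ 0) (x : ℝ) :
    LqNorm q (Ioi (Real.exp x)) (svWgt q b) =
      eLpNorm (fun z => (nnexp (v z) : ℝ≥0∞)) q (volume.restrict (Ioi x)) := by
  rw [← Real.image_exp_Ioi]
  refine LqNorm_exp_image measurableSet_Ioi hq fun z => ?_
  rw [svWgt, ofReal_rpow_mul_exp hb, nnexp_add, ENNReal.coe_mul]

variable {F : Type*} [AddCommGroup F] (N₀ N₁ : F → ℝ≥0∞)

lemma ofReal_rpow_mul_Kf_exp (hb : ∀ x, b (Real.exp x) = Real.exp (v x)) (θ s x : ℝ) (f : F) :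
    ENNReal.ofReal (Real.exp x ^ (-θ - s) * b (Real.exp x)) * Kf N₀ N₁ (Real.exp x) f =
      nnexp (-s * x) * (nnexp (v x + -θ * x) * logKf N₀ N₁ f x) := by
  rw [ofReal_rpow_mul_exp hb, ← mul_assoc, ← ENNReal.coe_mul, ← nnexp_add]
  ring_nf
  rfl

lemma normK_eq_weightedK (hb : ∀ x, b (Real.exp x) = Real.exp (v x)) (hq : q ≠ 0) (θ : ℝ) :
    normK N₀ N₁ θ q b = weightedK N₀ N₁ q fun x => v x + -θ * x :=
  funext fun f => LqNorm_Ioi_zero hq fun x => ofReal_rpow_mul_Kf_exp N₀ N₁ hb θ _ x f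

lemma normL_eq_limitingK {a u : ℝ → ℝ} {r : ℝ≥0∞}
    (hu : ∀ x, b (Real.exp x) / a (Real.exp x) = Real.exp (u x))
    (ha : ∀ x, a (Real.exp x) = Real.exp (v x)) (hr : r ≠ 0) (hq : q ≠ 0) (σ : ℝ) :
    normL N₀ N₁ σ r q b a = limitingK N₀ N₁ r q u fun x => v x + -σ * x := by
  funext f
  refine LqNorm_Ioi_zero hr fun x => ?_
  rw [ofReal_rpow_mul_exp (b := fun t => b t / a t) hu, nnexp_add, ENNReal.coe_mul, mul_assoc,
    ← Real.image_exp_Iio, LqNorm_exp_image measurableSet_Iio hq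
      fun z => ofReal_rpow_mul_Kf_exp N₀ N₁ ha σ _ z f]

end LogarithmicVariable

section SlowVariation

variable {b v : ℝ → ℝ} {r : ℝ≥0∞}

lemma EquivOn.exists_le_mul {s : Set ℝ} {f g : ℝ → ℝ} (h : EquivOn s f g) :
    ∃ K, ∀ x ∈ s, ∀ y ∈ s, g x ≤ g y → f x ≤ Real.exp K * f y := by
  obtain ⟨C, hC, h⟩ := h
  refine ⟨Real.log (C * C), fun x hx y hy hxy => ?_⟩
  rw [Real.exp_log (by positivity), mul_assoc]
  have hgy : g y ≤ C * f y := (inv_mul_le_iff₀ hC).1 (h y hy).1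
  exact (h x hx).2.trans (by gcongr; exact hxy.trans hgy)

lemma SlowlyVarying.exists_isFlat (hb : SlowlyVarying b) :
    ∃ v, IsFlat v ∧ ∀ x, b (Real.exp x) = Real.exp (v x) := by
  obtain ⟨-, hpos, hsv⟩ := hb
  have hexp (x : ℝ) : b (Real.exp x) = Real.exp (Real.log (b (Real.exp x))) :=
    (Real.exp_log (hpos _ (Real.exp_pos x))).symm
  refine ⟨fun x => Real.log (b (Real.exp x)), fun ε hε => ?_, hexp⟩
  obtain ⟨⟨g, hg, hbg⟩, ⟨g', hg', hbg'⟩⟩ := hsv ε hε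
  obtain ⟨K, hK⟩ := hbg.exists_le_mul
  obtain ⟨K', hK'⟩ := hbg'.exists_le_mul
  refine ⟨max K K', fun x y hxy => ?_⟩
  have hxy' := Real.exp_le_exp.2 hxy
  have h := hK _ (Real.exp_pos x) _ (Real.exp_pos y) (hg (Real.exp_pos x) (Real.exp_pos y) hxy')
  have h' := hK' _ (Real.exp_pos y) _ (Real.exp_pos x) (hg' (Real.exp_pos x) (Real.exp_pos y) hxy')
  beta_reduce at h h'
  rw [hexp x, hexp y, ← Real.exp_mul, ← Real.exp_mul, ← Real.exp_add, ← Real.exp_add,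
    ← Real.exp_add, Real.exp_le_exp] at h h'
  constructor <;> linarith [le_max_left K K', le_max_right K K']

lemma IsFlat.exists_isLogTail (hv : IsFlat v) (hb : ∀ x, b (Real.exp x) = Real.exp (v x))
    (hr : r ≠ 0) (hfin : LqNorm r (Ioi 1) (svWgt r b) ≠ ∞) :
    ∃ c, IsLogTail r v c ∧
      ∀ x, (LqNorm r (Ioi (Real.exp x)) (svWgt r b)).toReal = Real.exp (c x) := by
  rw [← Real.exp_zero, LqNorm_Ioi_svWgt hb hr] at hfin
  have hc := hv.isLogTail_log hr hfin
  exact ⟨_, hc, fun x => by rw [LqNorm_Ioi_svWgt hb hr, ← coe_nnexp, ← ENNReal.coe_toReal, hc x]⟩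

end SlowVariation

theorem theorem16_general {F : Type*} [AddCommGroup F] {N₀ N₁ : F → ℝ≥0∞} (h₀ : IsQuasiNorm N₀)
    (h₁ : IsQuasiNorm N₁) {θ θ₁ : ℝ} (hθ : 0 < θ) (hθ' : θ < 1) (hθ₁ : 0 < θ₁) (hθ₁' : θ₁ < 1)
    {r r₀ r₁ q₁ : ℝ≥0∞} (hr : 0 < r) (hr₀ : 0 < r₀) (hr₁ : 0 < r₁) (hq₁ : 0 < q₁)
    {a a₁ b₀ b₁ : ℝ → ℝ} (ha : SlowlyVarying a) (ha₁ : SlowlyVarying a₁)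
    (hb₀ : SlowlyVarying b₀) (hb₁ : SlowlyVarying b₁)
    (hfin₀ : LqNorm r₀ (Ioi 1) (svWgt r₀ b₀) ≠ ∞)
    (hfin₁ : LqNorm r₁ (Ioi 1) (svWgt r₁ fun s => b₁ s / a₁ s) ≠ ∞) {c₀ c₁ ρ : ℝ → ℝ}
    (hc₀ : ∀ t, c₀ t = (LqNorm r₀ (Ioi t) (svWgt r₀ b₀)).toReal)
    (hc₁ : ∀ t, c₁ t = a₁ t * (LqNorm r₁ (Ioi t) (svWgt r₁ fun s => b₁ s / a₁ s)).toReal)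
    (hρ : ∀ t, ρ t = t ^ θ₁ * (c₀ t / c₁ t)) :
    EquivNorms (normK (normK N₀ N₁ 0 r₀ b₀) (normL N₀ N₁ θ₁ r₁ q₁ b₁ a₁) θ r a)
      (normK N₀ N₁ (θ * θ₁) r fun t => c₀ t ^ (1 - θ) * c₁ t ^ θ * a (ρ t)) := by
  obtain ⟨w, hw, haw⟩ := ha.exists_isFlat
  obtain ⟨φ, hφ, haφ⟩ := ha₁.exists_isFlat
  obtain ⟨β₀, hβ₀, hbβ₀⟩ := hb₀.exists_isFlat
  obtain ⟨β₁, hβ₁, hbβ₁⟩ := hb₁.exists_isFlat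
  have hquot (x : ℝ) : b₁ (Real.exp x) / a₁ (Real.exp x) = Real.exp (β₁ x + -φ x) := by
    rw [hbβ₁, haφ, Real.exp_add, Real.exp_neg, div_eq_mul_inv]
  obtain ⟨γ, hγ, hcγ⟩ := hβ₀.exists_isLogTail hbβ₀ hr₀.ne' hfin₀
  obtain ⟨δ, hδ, hcδ⟩ := (hβ₁.add hφ.neg).exists_isLogTail hquot hr₁.ne' hfin₁
  set P := fun x => γ x - (φ x + -θ₁ * x) - δ x
  have hρP (x : ℝ) : ρ (Real.exp x) = Real.exp (P x) := by
    rw [hρ, hc₀, hc₁, hcγ, hcδ, haφ, ← Real.exp_mul, ← Real.exp_add, ← Real.exp_sub,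
      ← Real.exp_add]
    congr 1
    ring
  have hsharp (x : ℝ) : c₀ (Real.exp x) ^ (1 - θ) * c₁ (Real.exp x) ^ θ * a (ρ (Real.exp x)) =
      Real.exp ((1 - θ) * γ x + θ * (φ x + δ x) + w (P x)) := by
    rw [hρP, haw, hc₀, hc₁, hcγ, hcδ, haφ, ← Real.exp_add, ← Real.exp_mul, ← Real.exp_mul,
      ← Real.exp_add, ← Real.exp_add]
    ring_nf
  rw [normK_eq_weightedK _ _ hbβ₀ hr₀.ne', normL_eq_limitingK _ _ hquot haφ hr₁.ne' hq₁.ne',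
    normK_eq_weightedK _ _ haw hr.ne', normK_eq_weightedK _ _ hsharp hr.ne']
  convert equivNorms_weightedK_limitingK h₀ h₁ hr₀.ne' hr₁.ne' hq₁.ne' hβ₀ (hβ₁.add hφ.neg) hγ hδ
    (hφ.isInterior_sub_mul hθ₁ hθ₁') hr.ne' (hw.isInterior_sub_mul hθ hθ') using 3 with x
  · simp
  · ring

theorem theorem16
    (A₀ A₁ : QuasiBanach E)
    (hne : ∃ x : E, x ≠ 0 ∧ A₀.N x ≠ ∞ ∧ A₁.N x ≠ ∞)
    (θ θ₁ : ℝ) (hθ : 0 < θ) (hθ' : θ < 1) (hθ₁ : 0 < θ₁) (hθ₁' : θ₁ < 1)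
    (r r₀ r₁ q₁ : ℝ≥0∞) (hr : 0 < r) (hr₀ : 0 < r₀) (hr₁ : 0 < r₁) (hq₁ : 0 < q₁)
    (a a₁ b₀ b₁ : ℝ → ℝ)
    (h_sv_a : SlowlyVarying a)
    (h_sv_a₁ : SlowlyVarying a₁)
    (h_sv_b₀ : SlowlyVarying b₀)
    (h_sv_b₁ : SlowlyVarying b₁)
    (hfin₀ : LqNorm r₀ (Ioi 1) (svWgt r₀ (fun s => b₀ s)) ≠ ∞)
    (hfin₁ : LqNorm r₁ (Ioi 1) (svWgt r₁ (fun s => b₁ s / a₁ s)) ≠ ∞)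
    (c₀ c₁ ρ : ℝ → ℝ)
    (hc₀ : ∀ t, c₀ t = (LqNorm r₀ (Ioi t) (svWgt r₀ (fun s => b₀ s))).toReal)
    (hc₁ : ∀ t, c₁ t = a₁ t * (LqNorm r₁ (Ioi t) (svWgt r₁ (fun s => b₁ s / a₁ s))).toReal)
    (hρ : ∀ t, ρ t = t ^ θ₁ * (c₀ t / c₁ t)) :
    EquivNorms
      (normK (normK A₀.N A₁.N 0 r₀ b₀) (normL A₀.N A₁.N θ₁ r₁ q₁ b₁ a₁) θ r a)
      (normK A₀.N A₁.N (θ * θ₁) r (fun t => c₀ t ^ (1 - θ) * c₁ t ^ θ * a (ρ t))) :=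
  theorem16_general A₀.isQuasiNorm A₁.isQuasiNorm hθ hθ' hθ₁ hθ₁' hr hr₀ hr₁ hq₁ h_sv_a h_sv_a₁
    h_sv_b₀ h_sv_b₁ hfin₀ hfin₁ hc₀ hc₁ hρ

end
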